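/- arXiv:2307.04645 — 7 statements merged into one kernel-verified Lean document; each statement's English description precedes it below -/
import Mathlib

section
/- Let (S, n) be a regular local ring, let r ≥ 1 be an integer, and let a, b ⊆ S be ideals such that: (1) S/a is a Cohen–Macaulay ring with Krull dimension dim(S/a) = dim(S) − r; (2) b is generated by r+1 elements and b ⊊ a (strict inclusion); (3) the localizations satisfy a_q = b_q for every prime ideal q of S with dim(S/q) > dim(S) − (r+1). Then the quotient module a/b is a Cohen–Macaulay S-module and dim(Supp(a/b)) = dim(S) − (r+1). -/
open IsLocalRing

/-- The depth of a module `M` over a Noetherian local ring `R`: the supremum of the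
lengths of `M`-regular sequences consisting of elements of the maximal ideal. -/
noncomputable def moduleDepth (R M : Type*) [CommRing R] [IsLocalRing R]
    [AddCommGroup M] [Module R M] : ℕ∞ :=
  sSup {n : ℕ∞ | ∃ rs : List R, (rs.length : ℕ∞) = n ∧
    (∀ r ∈ rs, r ∈ maximalIdeal R) ∧ RingTheory.Sequence.IsRegular M rs}



open CategoryTheory Abelian RingTheory.Sequence
open scoped Pointwise
set_option linter.unusedSectionVars false

universe u

namespace CMQ

variable {S : Type u} [CommRing S]

/-- Ext groups of unbundled modules. -/
abbrev EX (S : Type u) [CommRing S] (N M : Type u) [AddCommGroup N] [Module S N]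
    [AddCommGroup M] [Module S M] (i : ℕ) : Type u :=
  Ext (ModuleCat.of S N) (ModuleCat.of S M) i

section seq
variable {N₁ N₂ N₃ : Type u} [AddCommGroup N₁] [Module S N₁] [AddCommGroup N₂] [Module S N₂]
  [AddCommGroup N₃] [Module S N₃] (X : Type u) [AddCommGroup X] [Module S X]

/-- The short complex of a pair of exact linear maps. -/
abbrev sc (f : N₁ →ₗ[S] N₂) (g : N₂ →ₗ[S] N₃) (h : Function.Exact f g) :
    ShortComplex (ModuleCat.{u} S) :=
  ModuleCat.shortComplexOfCompEqZero f g h.linearMap_comp_eq_zero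

variable {f : N₁ →ₗ[S] N₂} {g : N₂ →ₗ[S] N₃}

lemma sc_shortExact (h : Function.Exact f g) (hf : Function.Injective f)
    (hg : Function.Surjective g) : (sc f g h).ShortExact where
  exact := ModuleCat.shortComplex_exact _ h
  mono_f := by simpa [ModuleCat.mono_iff_injective] using hf
  epi_g := by simpa [ModuleCat.epi_iff_surjective] using hg

lemma ext_mid (h : Function.Exact f g) (hf : Function.Injective f)
    (hg : Function.Surjective g) {i : ℕ} (h1 : Subsingleton (EX S N₁ X i)) (h3 : Subsingleton (EX S N₃ X i)) :
    Subsingleton (EX S N₂ X i) := by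
  refine subsingleton_of_forall_eq 0 fun e => ?_
  obtain ⟨x, hx⟩ := Ext.contravariant_sequence_exact₂ (sc_shortExact h hf hg) _ e
    (Subsingleton.elim (α := EX S N₁ X i) _ _)
  rw [← hx, show x = 0 from Subsingleton.elim (α := EX S N₃ X i) _ _]
  simp

lemma ext_cov3 (h : Function.Exact f g) (hf : Function.Injective f)
    (hg : Function.Surjective g) {i : ℕ} (h2 : Subsingleton (EX S X N₂ i)) (h1 : Subsingleton (EX S X N₁ (i+1))) :
    Subsingleton (EX S X N₃ i) := by
  refine subsingleton_of_forall_eq 0 fun e => ?_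
  obtain ⟨x, hx⟩ := Ext.covariant_sequence_exact₃ _ (sc_shortExact h hf hg) e rfl
    (Subsingleton.elim (α := EX S X N₁ (i+1)) _ _)
  rw [← hx, show x = 0 from Subsingleton.elim (α := EX S X N₂ i) _ _]
  simp

lemma ext_cov1 (h : Function.Exact f g) (hf : Function.Injective f)
    (hg : Function.Surjective g) {i : ℕ} (h3 : Subsingleton (EX S X N₃ i)) (h2 : Subsingleton (EX S X N₂ (i+1))) :
    Subsingleton (EX S X N₁ (i+1)) := by
  refine subsingleton_of_forall_eq 0 fun e => ?_
  obtain ⟨x, hx⟩ := Ext.covariant_sequence_exact₁ _ (sc_shortExact h hf hg) e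
    (Subsingleton.elim (α := EX S X N₂ (i+1)) _ _) rfl
  rw [← hx, show x = 0 from Subsingleton.elim (α := EX S X N₃ i) _ _]
  simp

end seq

lemma ext_zero_iff (N M : Type u) [AddCommGroup N] [Module S N] [AddCommGroup M] [Module S M] :
    Subsingleton (EX S N M 0) ↔ Subsingleton (N →ₗ[S] M) :=
  (Ext.addEquiv₀.trans ModuleCat.homAddEquiv).subsingleton_congr

lemma ext_congr_left {N N' : Type u} (M : Type u) [AddCommGroup N] [Module S N]
    [AddCommGroup N'] [Module S N'] [AddCommGroup M] [Module S M] (e : N ≃ₗ[S] N') (i : ℕ)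
    (h : Subsingleton (EX S N' M i)) : Subsingleton (EX S N M i) := by
  refine subsingleton_of_forall_eq 0 fun x => ?_
  have : (Ext.mk₀ e.toModuleIso.hom).comp ((Ext.mk₀ e.toModuleIso.inv).comp x (zero_add i))
    (zero_add i) = x := by
    simp only [Ext.mk₀_comp_mk₀_assoc, Iso.hom_inv_id, Ext.mk₀_id_comp]
  rw [← this, show (Ext.mk₀ e.toModuleIso.inv).comp x (zero_add i) = 0 from
    Subsingleton.elim (α := EX S N' M i) _ _]
  simp

lemma ext_congr_right {N N' : Type u} (M : Type u) [AddCommGroup N] [Module S N]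
    [AddCommGroup N'] [Module S N'] [AddCommGroup M] [Module S M] (e : N ≃ₗ[S] N') (i : ℕ)
    (h : Subsingleton (EX S M N' i)) : Subsingleton (EX S M N i) := by
  refine subsingleton_of_forall_eq 0 fun x => ?_
  have : (x.comp (Ext.mk₀ e.toModuleIso.hom) (add_zero i)).comp (Ext.mk₀ e.toModuleIso.inv)
    (add_zero i) = x := by
    simp only [Ext.comp_assoc_of_third_deg_zero, Ext.mk₀_comp_mk₀, Iso.hom_inv_id, Ext.comp_mk₀_id]
  rw [← this, show x.comp (Ext.mk₀ e.toModuleIso.hom) (add_zero i) = 0 from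
    Subsingleton.elim (α := EX S M N' i) _ _]
  simp

lemma ext_of_sub_left {N : Type u} (M : Type u) [AddCommGroup N] [Module S N]
    [AddCommGroup M] [Module S M] (i : ℕ)
    [Subsingleton N] : Subsingleton (EX S N M i) := by
  refine subsingleton_of_forall_eq 0 fun x => ?_
  have : (Ext.mk₀ (𝟙 (ModuleCat.of S N))).comp x (zero_add i) = x := by simp
  rw [← this, show 𝟙 (ModuleCat.of S N) = 0 from ?_]
  · simp
  · ext y
    exact Subsingleton.elim (α := N) _ _

lemma ext_of_sub_right {N : Type u} (M : Type u) [AddCommGroup N] [Module S N]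
    [AddCommGroup M] [Module S M] (i : ℕ)
    [Subsingleton N] : Subsingleton (EX S M N i) := by
  refine subsingleton_of_forall_eq 0 fun x => ?_
  have : x.comp (Ext.mk₀ (𝟙 (ModuleCat.of S N))) (add_zero i) = x := by simp
  rw [← this, show 𝟙 (ModuleCat.of S N) = 0 from ?_]
  · simp
  · ext y
    exact Subsingleton.elim (α := N) _ _

section loc
variable [IsLocalRing S] [IsNoetherianRing S]

lemma ext_nak (N M : Type u) [AddCommGroup N] [Module S N] [AddCommGroup M] [Module S M]
    [Module.Finite S N] [Module.Finite S M] {x : S} (hx : x ∈ maximalIdeal S)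
    (reg : IsSMulRegular N x) (i : ℕ) (h : Subsingleton (EX S (QuotSMulTop x N) M (i+1))) :
    Subsingleton (EX S N M i) := by
  have hfin : Module.Finite S (EX S N M i) :=
    ModuleCat.finite_ext S (ModuleCat.of S N) (ModuleCat.of S M) i
  have key : ∀ e : EX S N M i, ∃ e' : EX S N M i, x • e' = e := by
    intro e
    have reg' : IsSMulRegular (ModuleCat.of S N) x := reg
    obtain ⟨(y : EX S N M i), hy⟩ := Ext.contravariant_sequence_exact₁ reg'.smulShortComplex_shortExact _
      (n₁ := i + 1) e (add_comm _ _)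
      (Subsingleton.elim (α := EX S (QuotSMulTop x N) M (i+1)) _ _)
    refine ⟨y, ?_⟩
    rw [← hy]
    change _ = (Ext.mk₀ (x • 𝟙 (ModuleCat.of S N))).comp y _
    rw [Ext.mk₀_smul]
    exact ((Ext.smul_comp (Ext.mk₀ (𝟙 (ModuleCat.of S N))) y _ x).trans (by simp)).symm
  have : (⊤ : Submodule S (EX S N M i)) = ⊥ := by
    apply Submodule.eq_bot_of_le_smul_of_le_jacobson_bot (maximalIdeal S) _ Module.Finite.fg_top
    · intro e _
      obtain ⟨e', rfl⟩ := key e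
      exact Submodule.smul_mem_smul hx trivial
    · exact maximalIdeal_le_jacobson _
  exact (Submodule.subsingleton_iff S).mp (subsingleton_of_bot_eq_top this.symm)

end loc

end CMQ



namespace CMQ
variable {S : Type u} [CommRing S] [IsLocalRing S] [IsNoetherianRing S]

/-- The residue field. -/
abbrev KK (S : Type u) [CommRing S] [IsLocalRing S] : Type u := S ⧸ maximalIdeal S

/-- `Ext^i(k, M) = 0` for `i < n`. -/
def DepthGE (S : Type u) [CommRing S] [IsLocalRing S] (M : Type u) [AddCommGroup M] [Module S M]
    (n : ℕ) : Prop := ∀ i < n, Subsingleton (EX S (KK S) M i)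

lemma wb_succ_le {t : WithBot ℕ∞} {n : ℕ} (h : t + 1 ≤ ((n + 1 : ℕ) : WithBot ℕ∞)) :
    t ≤ (n : WithBot ℕ∞) := by
  cases t with
  | bot => exact bot_le
  | coe t =>
    have h' : t + 1 ≤ ((n + 1 : ℕ) : ℕ∞) := by exact_mod_cast h
    cases t with
    | top => simp at h'
    | coe t =>
      have : t + 1 ≤ n + 1 := by exact_mod_cast h'
      have : t ≤ n := by omega
      exact_mod_cast this

lemma wb_zero_le {t : WithBot ℕ∞} (h : t ≠ ⊥) : 0 ≤ t := by
  cases t with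
  | bot => exact absurd rfl h
  | coe t => exact_mod_cast zero_le

lemma ext_smul_left {N M : Type u} [AddCommGroup N] [Module S N] [AddCommGroup M] [Module S M]
    {x : S} (hx : ∀ y : N, x • y = 0) {i : ℕ} (e : EX S N M i) : x • e = 0 := by
  have h : x • 𝟙 (ModuleCat.of S N) = 0 := by
    ext y
    exact hx y
  have : x • e = (Ext.mk₀ (x • 𝟙 (ModuleCat.of S N))).comp e (zero_add i) := by
    rw [Ext.mk₀_smul]
    exact ((Ext.smul_comp (Ext.mk₀ (𝟙 (ModuleCat.of S N))) e _ x).trans (by simp)).symm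
  rw [this, h]
  simp

lemma isSMulRegular_quot_prime (p : Ideal S) [p.IsPrime] {x : S} (hx : x ∉ p) :
    IsSMulRegular (S ⧸ p) x := by
  rw [isSMulRegular_iff_right_eq_zero_of_smul]
  intro m hm
  obtain ⟨m, rfl⟩ := Ideal.Quotient.mk_surjective m
  rw [Algebra.smul_def, Ideal.Quotient.algebraMap_eq, ← map_mul, Ideal.Quotient.eq_zero_iff_mem] at hm
  rw [Ideal.Quotient.eq_zero_iff_mem]
  exact (Ideal.IsPrime.mem_or_mem ‹_› hm).resolve_left hx

lemma dev (L : Type u) [AddCommGroup L] [Module S L] [Module.Finite S L] (P : ℕ → ℕ → Prop)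
    (hk : ∀ i n, P i n → Subsingleton (EX S (KK S) L i))
    (hP : ∀ i n, P i (n+1) → P (i+1) n) (n : ℕ) :
    ∀ (N : Type u) [AddCommGroup N] [Module S N] [Module.Finite S N],
      Module.supportDim S N ≤ n → ∀ i, P i n → Subsingleton (EX S N L i) := by
  induction n using Nat.strong_induction_on with
  | _ n ih =>
  intro N _ _ hN
  refine IsNoetherianRing.induction_on_isQuotientEquivQuotientPrime S hN
    (motive := fun N _ _ _ => Module.supportDim S N ≤ n → ∀ i, P i n → Subsingleton (EX S N L i))
    ?_ ?_ ?_
  · intro N _ _ _ _ _ i _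
    exact ext_of_sub_left L i
  · intro N _ _ _ p e hd i hi
    apply ext_congr_left L e
    rw [Module.supportDim_eq_of_equiv e] at hd
    by_cases hp : p.1 = maximalIdeal S
    · rw [hp]; exact hk i n hi
    · obtain ⟨x, hxm, hxp⟩ : ∃ x ∈ maximalIdeal S, x ∉ p.1 := by
        by_contra! hcon
        exact hp (le_antisymm (le_maximalIdeal p.2.ne_top) hcon)
      have := p.2
      have reg := isSMulRegular_quot_prime p.1 hxp
      have hdim := Module.supportDim_quotSMulTop_succ_eq_supportDim reg hxm
      have : Nontrivial (S ⧸ p.1) := Ideal.Quotient.nontrivial_iff.mpr p.2.ne_top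
      have nt : Nontrivial (QuotSMulTop x (S ⧸ p.1)) := by
        have := Submodule.top_ne_pointwise_smul_of_mem_jacobson_annihilator (R := S)
          (M := S ⧸ p.1) (r := x) (maximalIdeal_le_jacobson _ hxm)
        exact Submodule.Quotient.nontrivial_iff.mpr this.symm
      have hnb := Module.supportDim_ne_bot_of_nontrivial S (QuotSMulTop x (S ⧸ p.1))
      rw [← hdim] at hd
      have h0 : (0 : WithBot ℕ∞) ≤ Module.supportDim S (QuotSMulTop x (S ⧸ p.1)) := by
        exact wb_zero_le hnb
      cases n with
      | zero =>
        exfalso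
        generalize Module.supportDim S (QuotSMulTop x (S ⧸ p.1)) = t at *
        have := (add_le_add_left h0 1).trans hd
        rw [zero_add] at this
        exact absurd this (by decide)
      | succ n =>
        apply ext_nak _ _ hxm reg
        apply ih n (by omega) _ _ _ (hP _ _ hi)
        exact wb_succ_le hd
  · intro N₁ _ _ _ N₂ _ _ _ N₃ _ _ _ f g hf hg hfg h1 h3 hd i hi
    exact ext_mid L hfg hf hg (h1 ((Module.supportDim_le_of_injective f hf).trans hd) i hi)
      (h3 ((Module.supportDim_le_of_surjective g hg).trans hd) i hi)

/-- Ischebeck -/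
lemma ischebeck {L : Type u} [AddCommGroup L] [Module S L] [Module.Finite S L] {m : ℕ}
    (hL : DepthGE S L m) (N : Type u) [AddCommGroup N] [Module S N] [Module.Finite S N] {n : ℕ}
    (hN : Module.supportDim S N ≤ n) {i : ℕ} (hi : i + n < m) : Subsingleton (EX S N L i) :=
  dev L (fun i n => i + n < m) (fun i n h => hL i (by omega)) (fun i n h => by omega) n N hN i hi

lemma supportDim_le_nat (N : Type u) [AddCommGroup N] [Module S N] :
    ∃ n : ℕ, Module.supportDim S N ≤ n := by
  obtain ⟨n, hn⟩ : ∃ n : ℕ, ringKrullDim S ≤ n := by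
    have := ringKrullDim_lt_top (R := S)
    generalize ringKrullDim S = t at this
    cases t with
    | bot => exact ⟨0, bot_le⟩
    | coe t =>
      cases t with
      | top => exact absurd this (by simp)
      | coe t => exact ⟨t, le_rfl⟩
  exact ⟨n, (Module.supportDim_le_ringKrullDim S N).trans hn⟩

lemma finInj {L : Type u} [AddCommGroup L] [Module S L] [Module.Finite S L] {d : ℕ}
    (hL : ∀ i, d < i → Subsingleton (EX S (KK S) L i)) (N : Type u) [AddCommGroup N] [Module S N]
    [Module.Finite S N] {i : ℕ} (hi : d < i) : Subsingleton (EX S N L i) := by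
  obtain ⟨n, hn⟩ := supportDim_le_nat (S := S) N
  exact dev L (fun i _ => d < i) (fun i n h => hL i h) (fun i n h => by omega) n N hn i hi

lemma ab {L : Type u} [AddCommGroup L] [Module S L] [Module.Finite S L] {d : ℕ}
    (hL : ∀ i, d < i → Subsingleton (EX S (KK S) L i)) (rs : List S) :
    ∀ (N : Type u) [AddCommGroup N] [Module S N] [Module.Finite S N]
    (_ : ∀ r ∈ rs, r ∈ maximalIdeal S) (_ : IsWeaklyRegular N rs) {i : ℕ} (_ : d < i + rs.length),
    Subsingleton (EX S N L i) := by
  induction rs with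
  | nil => intro N _ _ _ _ _ i hi; exact finInj hL N (by simpa using hi)
  | cons x rs ih =>
    intro N _ _ _ hm hr i hi
    rw [isWeaklyRegular_cons_iff] at hr
    apply ext_nak _ _ (hm x (by simp)) hr.1
    exact ih _ (fun r hr => hm r (by simp [hr])) hr.2 (by simp at hi; omega)

/-- The dual of a maximal Cohen-Macaulay module. -/
lemma dual_wreg {L : Type u} [AddCommGroup L] [Module S L] [Module.Finite S L] {d : ℕ}
    (hL : ∀ i, d < i → Subsingleton (EX S (KK S) L i)) (hL' : DepthGE S L d) (rs : List S) :
    ∀ (N : Type u) [AddCommGroup N] [Module S N] [Module.Finite S N]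
    (_ : ∀ r ∈ rs, r ∈ maximalIdeal S) (_ : IsWeaklyRegular N rs)
    (_ : Module.supportDim S N ≤ rs.length)
    {i : ℕ} (_ : i + rs.length = d),
    IsWeaklyRegular (EX S N L i) rs := by
  induction rs with
  | nil => intro N _ _ _ _ _ _ i hi; exact IsWeaklyRegular.nil _ _
  | cons x rs ih =>
    intro N _ _ _ hm hr hdim i hi
    have hab : Subsingleton (EX S N L (i+1)) := ab hL (x :: rs) N hm hr (by omega)
    rw [isWeaklyRegular_cons_iff] at hr
    have hxm := hm x (by simp)
    have hdim' : Module.supportDim S (QuotSMulTop x N) ≤ rs.length := by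
      rw [← Module.supportDim_quotSMulTop_succ_eq_supportDim hr.1 hxm, List.length_cons] at hdim
      exact wb_succ_le hdim
    have h1 := ih (QuotSMulTop x N) (fun r hr => hm r (by simp [hr])) hr.2 hdim' (i := i + 1)
      (by simp at hi; omega)
    have hsub : Subsingleton (EX S (QuotSMulTop x N) L i) :=
      ischebeck hL' _ hdim' (by simp at hi; omega)
    have reg' : IsSMulRegular (ModuleCat.of S N) x := hr.1
    have hx1 : ∀ y : EX S N L i, (Ext.mk₀ (x • 𝟙 (ModuleCat.of S N))).comp y (zero_add i) = x • y := by
      intro y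
      rw [Ext.mk₀_smul]
      exact ((Ext.smul_comp (Ext.mk₀ (𝟙 (ModuleCat.of S N))) y _ x).trans (by simp))
    rw [isWeaklyRegular_cons_iff]
    constructor
    · rw [isSMulRegular_iff_right_eq_zero_of_smul]
      intro y hy
      rw [← hx1] at hy
      obtain ⟨z, hz⟩ := Ext.contravariant_sequence_exact₂ reg'.smulShortComplex_shortExact _ y hy
      rw [← hz, show z = 0 from Subsingleton.elim (α := EX S (QuotSMulTop x N) L i) _ _]
      exact Ext.comp_zero _ _ _ _ _
    · let δ : EX S N L i →ₗ[S] EX S (QuotSMulTop x N) L (i+1) :=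
        reg'.smulShortComplex_shortExact.extClass.precompOfLinear S (ModuleCat.of S L)
          (add_comm 1 i)
      have hsurj : Function.Surjective δ := by
        intro y
        obtain ⟨z, hz⟩ := Ext.contravariant_sequence_exact₃ reg'.smulShortComplex_shortExact _ y
          (Subsingleton.elim (α := EX S N L (i+1)) _ _) (add_comm 1 i)
        exact ⟨z, hz⟩
      have hker : LinearMap.ker δ = x • (⊤ : Submodule S (EX S N L i)) := by
        ext y
        rw [LinearMap.mem_ker, Submodule.mem_smul_pointwise_iff_exists]
        constructor
        · intro hy
          obtain ⟨z, hz⟩ := Ext.contravariant_sequence_exact₁ reg'.smulShortComplex_shortExact _ y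
            (add_comm 1 i) hy
          exact ⟨z, trivial, (hx1 z).symm.trans hz⟩
        · rintro ⟨z, -, rfl⟩
          rw [map_smul]
          exact ext_smul_left (fun y => by
              obtain ⟨y, rfl⟩ := Submodule.mkQ_surjective _ y
              rw [← map_smul]
              exact (Submodule.Quotient.mk_eq_zero _).mpr
                (Submodule.smul_mem_pointwise_smul y x (⊤ : Submodule S N) trivial)) _
      exact ((((Submodule.quotEquivOfEq _ _ hker).symm.trans
        (δ.quotKerEquivOfSurjective hsurj)).isWeaklyRegular_congr rs).mpr h1)

end CMQ


namespace CMQ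

lemma coset_avoid {R : Type u} [CommRing R] (s : Finset (Ideal R)) (hs : ∀ P ∈ s, P.IsPrime)
    (x : R) (J : Ideal R) (h : ∀ P ∈ s, x ∈ P → ¬ J ≤ P) : ∃ y ∈ J, ∀ P ∈ s, x + y ∉ P := by
  classical
  let m := s.filter fun P => ∀ Q ∈ s, P ≤ Q → P = Q
  have hm : ∀ P ∈ s, ∃ Q ∈ m, P ≤ Q := by
    intro P hP
    obtain ⟨Q, hPQ, hQ⟩ := s.exists_le_maximal hP
    exact ⟨Q, Finset.mem_filter.mpr ⟨hQ.prop, fun Q' h1 h2 => le_antisymm h2 (hQ.2 h1 h2)⟩, hPQ⟩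
  let A := m.filter fun P => x ∈ P
  let B := m.filter fun P => x ∉ P
  let K := J ⊓ B.inf id
  have hK : ¬ ((K : Set R) ⊆ ⋃ i ∈ (↑A : Set (Ideal R)), (id i : Ideal R)) := by
    rw [Ideal.subset_union_prime ⊥ ⊥]
    · rintro ⟨P, hP, hle⟩
      obtain ⟨hPm, hxP⟩ := Finset.mem_filter.mp hP
      obtain ⟨hPs, hPmax⟩ := Finset.mem_filter.mp hPm
      rcases (hs P hPs).inf_le.mp hle with h1 | h1
      · exact h P hPs hxP h1
      · obtain ⟨Q, hQ, hQP⟩ := (hs P hPs).inf_le'.mp h1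
        obtain ⟨hQm, hxQ⟩ := Finset.mem_filter.mp hQ
        obtain ⟨hQs, hQmax⟩ := Finset.mem_filter.mp hQm
        have : Q = P := hQmax P hPs hQP
        exact hxQ (this ▸ hxP)
    · intro P hP _ _
      exact hs P (Finset.mem_filter.mp (Finset.mem_filter.mp hP).1).1
  obtain ⟨y, hyK, hy⟩ := Set.not_subset.mp hK
  simp only [Set.mem_iUnion, not_exists] at hy
  have hyK' : y ∈ J ∧ y ∈ B.inf id := hyK
  refine ⟨y, hyK'.1, fun P hP hxy => ?_⟩
  obtain ⟨Q, hQm, hPQ⟩ := hm P hP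
  by_cases hxQ : x ∈ Q
  · exact hy Q (Finset.mem_coe.mpr (Finset.mem_filter.mpr ⟨hQm, hxQ⟩))
      ((Ideal.add_mem_iff_right Q hxQ).mp (hPQ hxy))
  · have : y ∈ Q := (Finset.inf_le (f := id) (Finset.mem_filter.mpr ⟨hQm, hxQ⟩)) hyK'.2
    exact hxQ ((Ideal.add_mem_iff_left Q this).mp (hPQ hxy))

lemma reg_seq (d : ℕ) : ∀ (R : Type u) [CommRing R] [IsLocalRing R] [IsNoetherianRing R]
    (v : Fin d → R) (_ : Ideal.span (Set.range v) = maximalIdeal R) (_ : ringKrullDim R = d),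
    IsDomain R ∧ ∃ rs : List R, rs.length = d ∧ Ideal.ofList rs = maximalIdeal R ∧
      IsWeaklyRegular R rs := by
  induction d with
  | zero =>
    intro R _ _ _ v hv hd
    have hm : maximalIdeal R = ⊥ := by rw [← hv]; simp
    refine ⟨?_, [], rfl, by simp [hm], IsWeaklyRegular.nil _ _⟩
    exact (isField_iff_maximalIdeal_eq.mpr hm).isDomain
  | succ d ih =>
    intro R _ _ _ v hv hd
    let J := Ideal.span (Set.range (fun i : Fin d => v i.succ))
    have hJ : maximalIdeal R = Ideal.span {v 0} ⊔ J := by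
      rw [← hv, ← Ideal.span_union]
      congr 1
      ext z
      simp only [Set.mem_range, Fin.exists_fin_succ, Set.mem_union, Set.mem_singleton_iff]
      tauto
    obtain ⟨y, hyJ, hy⟩ := coset_avoid (minimalPrimes.finite_of_isNoetherianRing R).toFinset
      (fun P hP => ((Set.Finite.mem_toFinset _).mp hP).1.1) (v 0) J (by
        intro P hP hvP hJP
        have hP' := (Set.Finite.mem_toFinset _).mp hP
        have hPp : P.IsPrime := hP'.1.1
        have : P = maximalIdeal R := le_antisymm (le_maximalIdeal hPp.ne_top) (by
          rw [hJ]; exact sup_le ((Ideal.span_singleton_le_iff_mem _).mpr hvP) hJP)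
        have h0 := (maximalIdeal_height_eq_ringKrullDim (R := R)).trans hd
        rw [← this, Ideal.height_eq_zero_iff.mpr hP'] at h0
        have : ((0 : ℕ) : ℕ∞) = ((d + 1 : ℕ) : ℕ∞) := by exact_mod_cast h0
        have := Nat.cast_injective this
        omega)
    set x := v 0 + y with hx
    have hmx : maximalIdeal R = Ideal.span {x} ⊔ J := by
      rw [hJ]
      apply le_antisymm
      · refine sup_le ?_ le_sup_right
        rw [Ideal.span_singleton_le_iff_mem, show v 0 = x + -y by simp [hx]]
        exact Submodule.add_mem_sup (Ideal.mem_span_singleton_self x) (neg_mem hyJ)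
      · refine sup_le ?_ le_sup_right
        rw [Ideal.span_singleton_le_iff_mem]
        exact Submodule.add_mem_sup (Ideal.mem_span_singleton_self _) hyJ
    have hxm : x ∈ maximalIdeal R := by
      rw [hmx]; exact Ideal.mem_sup_left (Ideal.mem_span_singleton_self x)
    have hsx : (x • ⊤ : Ideal R) = Ideal.span {x} := by
      simp [← Submodule.ideal_span_singleton_smul]
    let R' := R ⧸ (x • ⊤ : Ideal R)
    have : Nontrivial R' := Ideal.Quotient.nontrivial_iff.mpr (by
      rw [hsx]
      exact fun h => Ideal.IsPrime.ne_top' (top_le_iff.mp (h ▸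
        (Ideal.span_singleton_le_iff_mem _).mpr hxm)))
    let q : R →+* R' := Ideal.Quotient.mk _
    have hq : Function.Surjective q := Ideal.Quotient.mk_surjective
    have : IsLocalRing R' := IsLocalRing.of_surjective' q hq
    have hqm : (maximalIdeal R).map q = maximalIdeal R' := by
      have hlh : IsLocalHom q := IsLocalHom.of_surjective q hq
      have := (local_hom_TFAE q).out 0 4 |>.mp hlh
      rw [← this]
      exact Ideal.map_comap_of_surjective q hq _
    have hqx : q x = 0 := by
      rw [Ideal.Quotient.eq_zero_iff_mem, hsx]; exact Ideal.mem_span_singleton_self x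
    have hm' : Ideal.span (Set.range (fun i : Fin d => q (v i.succ))) = maximalIdeal R' := by
      rw [← hqm, hmx, Ideal.map_sup, Ideal.map_span, Ideal.map_span, ← Set.range_comp]
      simp [hqx, Function.comp_def]
    have hd' : ringKrullDim R' = d := by
      have h1 := Module.supportDim_quotSMulTop_succ_eq_of_notMem_minimalPrimes_of_mem_maximalIdeal
        (R := R) (M := R) (x := x) (by
          intro p hp
          have hann : Module.annihilator R R = ⊥ :=
            Module.annihilator_eq_bot.mpr inferInstance
          rw [hann] at hp
          exact hy p ((Set.Finite.mem_toFinset _).mpr hp)) hxm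
      rw [Module.supportDim_self_eq_ringKrullDim, hd] at h1
      have h2 : Module.supportDim R (QuotSMulTop x R) = ringKrullDim R' :=
        Module.supportDim_quotient_eq_ringKrullDim _
      rw [h2] at h1
      generalize ringKrullDim R' = t at h1
      cases t with
      | bot => exact absurd h1.symm (by rw [WithBot.bot_add]; exact WithBot.natCast_ne_bot _)
      | coe t =>
        have h' : t + 1 = ((d + 1 : ℕ) : ℕ∞) := by exact_mod_cast h1
        cases t with
        | top => simp at h'; exact absurd h' (by exact ENat.top_ne_natCast (d+1))
        | coe t =>
          have : t + 1 = d + 1 := by exact_mod_cast h'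
          have : t = d := by omega
          exact_mod_cast this
    obtain ⟨hdom, rs', hlen, hof, hreg⟩ := ih R' _ hm' hd'
    have hpr : (x • ⊤ : Ideal R).IsPrime := (Ideal.Quotient.isDomain_iff_prime _).mp hdom
    obtain ⟨Q, hQmin, hQle⟩ := Ideal.exists_minimalPrimes_le (bot_le : ⊥ ≤ (x • ⊤ : Ideal R))
    have hxQ : x ∉ Q := hy Q ((Set.Finite.mem_toFinset _).mpr hQmin)
    have hQ0 : Q = ⊥ := by
      apply Submodule.eq_bot_of_le_smul_of_le_jacobson_bot (Ideal.span {x}) _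
        (IsNoetherian.noetherian Q)
      · intro z hz
        have hz' := hQle hz
        rw [hsx, Ideal.mem_span_singleton] at hz'
        obtain ⟨w, rfl⟩ := hz'
        exact Submodule.smul_mem_smul (Ideal.mem_span_singleton_self x)
          ((hQmin.1.1.mem_or_mem hz).resolve_left hxQ)
      · exact ((Ideal.span_singleton_le_iff_mem _).mpr hxm).trans (maximalIdeal_le_jacobson _)
    have hdomR : IsDomain R := by
      have : (⊥ : Ideal R).IsPrime := hQ0 ▸ hQmin.1.1
      exact IsDomain.of_bot_isPrime R
    refine ⟨hdomR, ?_⟩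
    obtain ⟨rs, rfl⟩ := (List.map_surjective_iff.mpr hq) rs'
    refine ⟨x :: rs, by simpa using hlen, ?_, ?_⟩
    · rw [Ideal.ofList_cons]
      rw [← Ideal.map_ofList] at hof
      apply le_antisymm
      · refine sup_le ((Ideal.span_singleton_le_iff_mem _).mpr hxm) ?_
        rw [← hqm] at hof
        intro z hz
        by_contra hzu
        rw [mem_maximalIdeal, mem_nonunits_iff, not_not] at hzu
        have : q z ∈ maximalIdeal R' := by
          rw [← hqm, ← hof]; exact Ideal.mem_map_of_mem q hz
        exact this (hzu.map q)
      · intro z hz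
        have : q z ∈ (Ideal.ofList rs).map q := by
          rw [hof, ← hqm]; exact Ideal.mem_map_of_mem q hz
        obtain ⟨w, hw, hwz⟩ := (Ideal.mem_map_iff_of_surjective q hq).mp this
        have h3 : z - w ∈ Ideal.span {x} := by
          rw [← hsx]; exact Ideal.Quotient.eq.mp hwz.symm
        have := Submodule.add_mem_sup h3 hw
        simpa using this
    · rw [isWeaklyRegular_cons_iff]
      refine ⟨?_, ?_⟩
      · have hx0 : x ≠ 0 := fun h => hxQ (h ▸ Q.zero_mem)
        rw [isSMulRegular_iff_right_eq_zero_of_smul]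
        intro m hm
        exact (mul_eq_zero.mp hm).resolve_left hx0
      · exact (isWeaklyRegular_map_algebraMap_iff R' R' rs).mp hreg

end CMQ


namespace CMQ
variable {S : Type u} [CommRing S] [IsLocalRing S] [IsNoetherianRing S]

lemma smul_top_lt (M : Type u) [AddCommGroup M] [Module S M] [Module.Finite S M] [Nontrivial M] :
    (maximalIdeal S • ⊤ : Submodule S M) < ⊤ := by
  rw [lt_top_iff_ne_top]
  intro h
  have := Submodule.eq_bot_of_le_smul_of_le_jacobson_bot (maximalIdeal S) (⊤ : Submodule S M)
    Module.Finite.fg_top h.ge (maximalIdeal_le_jacobson _)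
  exact bot_ne_top this.symm

lemma support_KK : Module.support S (KK S) = PrimeSpectrum.zeroLocus (maximalIdeal S : Set S) := by
  rw [Module.support_eq_zeroLocus, Ideal.annihilator_quotient]

lemma depthGE_of_wreg (M : Type u) [AddCommGroup M] [Module S M] [Module.Finite S M]
    (rs : List S) (hm : ∀ r ∈ rs, r ∈ maximalIdeal S) (hr : IsWeaklyRegular M rs) :
    DepthGE S M rs.length := by
  rcases subsingleton_or_nontrivial M with h | h
  · intro i _
    exact ext_of_sub_right _ i
  · have hreg : IsRegular M rs := ⟨hr, fun h' => (smul_top_lt (S := S) M).not_ge (by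
      nth_rw 1 [h']
      exact Submodule.smul_mono_left (Ideal.span_le.mpr hm))⟩
    exact ModuleCat.subsingleton_ext_of_exists_isRegular (maximalIdeal S) (ModuleCat.of S (KK S))
      support_KK.le (ModuleCat.of S M) (smul_top_lt M) rs hm hreg

lemma exists_reg (M : Type u) [AddCommGroup M] [Module S M] [Module.Finite S M] [Nontrivial M]
    {n : ℕ} (h : DepthGE S M n) :
    ∃ rs : List S, rs.length = n ∧ (∀ r ∈ rs, r ∈ maximalIdeal S) ∧ IsRegular M rs :=
  ModuleCat.exists_isRegular_of_exists_subsingleton_ext (maximalIdeal S) n (ModuleCat.of S M)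
    (smul_top_lt M) (ModuleCat.of S (KK S)) support_KK h

variable (S) in
lemma reg_facts (h : ∃ v : Finset S, Ideal.span (v : Set S) = maximalIdeal S ∧
      (v.card : WithBot ℕ∞) = ringKrullDim S) :
    ∃ d : ℕ, ringKrullDim S = d ∧ DepthGE S S d ∧
      ∀ i, d < i → Subsingleton (EX S (KK S) S i) := by
  obtain ⟨v, hv, hd⟩ := h
  obtain ⟨-, rs, hlen, hof, hw⟩ := reg_seq v.card S (fun i => (v.equivFin.symm i : S)) (by
    rw [← hv]; congr 1; ext z
    simp only [Set.mem_range]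
    constructor
    · rintro ⟨i, rfl⟩; exact (v.equivFin.symm i).2
    · intro hz; exact ⟨v.equivFin ⟨z, hz⟩, by simp⟩) hd.symm
  have hm : ∀ r ∈ rs, r ∈ maximalIdeal S := by
    intro r hr
    rw [← hof]; exact Ideal.subset_span hr
  refine ⟨v.card, hd.symm, hlen ▸ depthGE_of_wreg S rs hm hw, fun i hi => ?_⟩
  have hreg : IsRegular S rs := ⟨hw, fun h => (smul_top_lt (S := S) S).not_ge (by
      nth_rw 1 [h]
      exact Submodule.smul_mono_left (Ideal.span_le.mpr hm))⟩
  have hp := ModuleCat.projectiveDimension_quotient_eq_length.{u} rs hreg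
  have hp' : HasProjectiveDimensionLE (ModuleCat.of S (Shrink.{u} (S ⧸ Ideal.ofList rs)))
    rs.length := (projectiveDimension_le_iff _ _).mp hp.le
  have hs : Subsingleton (EX S (Shrink.{u} (S ⧸ Ideal.ofList rs)) S i) :=
    HasProjectiveDimensionLT.subsingleton (ModuleCat.of S (Shrink.{u} (S ⧸ Ideal.ofList rs)))
      (rs.length + 1) i (by omega) _
  exact ext_congr_left S ((Submodule.quotEquivOfEq _ _ hof.symm).trans
    (Shrink.linearEquiv S _).symm) i hs

/-- Ideals generated by regular sequences of length `k`. -/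
inductive CI : ℕ → Ideal S → Prop
  | zero : CI 0 ⊥
  | succ (k : ℕ) (I : Ideal S) (x : S) (h : CI k I) (hx : IsSMulRegular (S ⧸ I) x)
      (hm : x ∈ maximalIdeal S) : CI (k + 1) (I ⊔ Ideal.span {x})

/-- multiplication by `x` on `S/I`. -/
abbrev mulx (I : Ideal S) (x : S) : (S ⧸ I) →ₗ[S] (S ⧸ I) := x • LinearMap.id

/-- projection `S/I → S/J`. -/
abbrev prj {I J : Ideal S} (h : I ≤ J) : (S ⧸ I) →ₗ[S] (S ⧸ J) :=
  Submodule.mapQ I J LinearMap.id h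

lemma mulx_inj {I : Ideal S} {x : S} (hx : IsSMulRegular (S ⧸ I) x) :
    Function.Injective (mulx I x) := hx

lemma prj_surj {I J : Ideal S} (h : I ≤ J) : Function.Surjective (prj h) := by
  intro y
  obtain ⟨y, rfl⟩ := Submodule.Quotient.mk_surjective _ y
  exact ⟨Submodule.Quotient.mk y, rfl⟩

lemma mulx_exact (I : Ideal S) (x : S) :
    Function.Exact (mulx I x) (prj (le_sup_left : I ≤ I ⊔ Ideal.span {x})) := by
  intro y
  obtain ⟨y, rfl⟩ := Submodule.Quotient.mk_surjective _ y
  constructor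
  · intro h
    have h' : y ∈ I ⊔ Ideal.span {x} := (Submodule.Quotient.mk_eq_zero _).mp h
    obtain ⟨i, hi, z, hz, rfl⟩ := Submodule.mem_sup.mp h'
    obtain ⟨w, rfl⟩ := Ideal.mem_span_singleton.mp hz
    refine ⟨Submodule.Quotient.mk w, ?_⟩
    change x • (Submodule.Quotient.mk w : S ⧸ I) = _
    rw [← Submodule.Quotient.mk_smul, eq_comm, Submodule.Quotient.eq]
    simpa using hi
  · rintro ⟨w, hw⟩
    obtain ⟨w, rfl⟩ := Submodule.Quotient.mk_surjective _ w
    rw [← hw]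
    change prj _ (x • (Submodule.Quotient.mk w : S ⧸ I)) = _
    rw [← Submodule.Quotient.mk_smul]
    refine (Submodule.Quotient.mk_eq_zero _).mpr ?_
    exact Ideal.mem_sup_right (Ideal.mem_span_singleton.mpr ⟨w, rfl⟩)

lemma CI_dim {d : ℕ} (hd : ringKrullDim S = d) {k : ℕ} {I : Ideal S} (h : CI k I) :
    Module.supportDim S (S ⧸ I) + k ≤ d := by
  induction h with
  | zero =>
    rw [← hd]
    simpa using Module.supportDim_le_ringKrullDim S (S ⧸ (⊥ : Ideal S))
  | succ k I x h hx hm ih =>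
    refine le_trans ?_ ih
    rw [← Module.supportDim_quotSMulTop_succ_eq_supportDim hx hm]
    have : Module.supportDim S (S ⧸ I ⊔ Ideal.span {x}) ≤
        Module.supportDim S (QuotSMulTop x (S ⧸ I)) := by
      refine Module.supportDim_le_of_surjective (Submodule.liftQ (x • ⊤)
        (prj (le_sup_left : I ≤ I ⊔ Ideal.span {x})) ?_) ?_
      · rintro _ ⟨y, -, rfl⟩
        exact (mulx_exact I x (x • y)).mpr ⟨y, rfl⟩
      · intro y
        obtain ⟨z, hz⟩ := prj_surj (le_sup_left : I ≤ I ⊔ Ideal.span {x}) y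
        exact ⟨Submodule.Quotient.mk z, hz⟩
    push_cast
    rw [add_comm (k : WithBot ℕ∞) 1, ← add_assoc]
    gcongr

lemma CI_depth {d : ℕ} (hd : DepthGE S S d) {k : ℕ} {I : Ideal S} (h : CI k I) :
    DepthGE S (S ⧸ I) (d - k) := by
  induction h with
  | zero =>
    intro i hi
    exact ext_congr_right _ (Submodule.quotEquivOfEqBot ⊥ rfl) i (hd i hi)
  | succ k I x h hx hm ih =>
    intro i hi
    exact ext_cov3 _ (mulx_exact I x) (mulx_inj hx) (prj_surj _) (ih i (by omega))
      (ih (i+1) (by omega))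

lemma CI_class {d : ℕ} (hd : DepthGE S S d) {k : ℕ} {I : Ideal S} (h : CI k I) :
    ∃ c : EX S (S ⧸ I) S k,
      (∀ (N : Type u) [AddCommGroup N] [Module S N] [Module.Finite S N] (n j : ℕ)
        (_ : Module.supportDim S N ≤ n) (_ : j + k + n ≤ d) (φ : EX S N (S ⧸ I) j),
        φ.comp c rfl = 0 → φ = 0) ∧
      (∀ (N : Type u) [AddCommGroup N] [Module S N] (_ : ∀ x ∈ I, ∀ y : N, x • y = 0) (j : ℕ)
        (e : EX S N S (j + k)), ∃ φ : EX S N (S ⧸ I) j, φ.comp c rfl = e) := by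
  induction h with
  | zero =>
    let E : (S ⧸ (⊥ : Ideal S)) ≃ₗ[S] S := Submodule.quotEquivOfEqBot ⊥ rfl
    refine ⟨Ext.mk₀ E.toModuleIso.hom, ?_, ?_⟩
    · intro N _ _ _ n j _ _ φ h
      have : (φ.comp (Ext.mk₀ E.toModuleIso.hom) (add_zero j)).comp (Ext.mk₀ E.toModuleIso.inv)
          (add_zero j) = φ := by
        simp only [Ext.comp_assoc_of_third_deg_zero, Ext.mk₀_comp_mk₀, Iso.hom_inv_id,
          Ext.comp_mk₀_id]
      rw [← this, h, Ext.zero_comp]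
    · intro N _ _ _ j e
      refine ⟨e.comp (Ext.mk₀ E.toModuleIso.inv) (add_zero j), ?_⟩
      simp only [Ext.comp_assoc_of_third_deg_zero, Ext.mk₀_comp_mk₀, Iso.inv_hom_id,
          Ext.comp_mk₀_id]
  | succ k I x h hx hm ih =>
    obtain ⟨c, hinj, hsurj⟩ := ih
    have hse := sc_shortExact (mulx_exact I x) (mulx_inj hx) (prj_surj _)
    let δ : EX S (S ⧸ I ⊔ Ideal.span {x}) (S ⧸ I) 1 := hse.extClass
    refine ⟨δ.comp c (add_comm 1 k), ?_, ?_⟩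
    · intro N _ _ _ n j hn hj φ hφ
      have h1 : (φ.comp δ rfl).comp c (by omega : j + 1 + k = j + (k + 1)) = 0 := by
        rw [← hφ]
        exact Ext.comp_assoc φ δ c rfl (add_comm 1 k) (by omega)
      have h2 : φ.comp δ rfl = 0 := by
        apply hinj N n (j + 1) hn (by omega)
        have : ∀ (m : ℕ) (hm : j + 1 + k = m), (φ.comp δ rfl).comp c hm = 0 →
          (φ.comp δ rfl).comp c rfl = 0 := by
          rintro m rfl h; exact h
        exact this _ _ h1
      obtain ⟨ψ, hψ⟩ := Ext.covariant_sequence_exact₃ _ hse φ rfl h2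
      have : Subsingleton (EX S N (S ⧸ I) j) := ischebeck (CI_depth hd h) N hn (by omega)
      rw [← hψ, show ψ = 0 from Subsingleton.elim (α := EX S N (S ⧸ I) j) _ _, Ext.zero_comp]
    · intro N _ _ hN j e
      have hcast : ∀ (m : ℕ) (hm : j + 1 + k = m) (e : EX S N S m),
          ∃ ψ : EX S N (S ⧸ I) (j + 1), ψ.comp c hm = e := by
        rintro m rfl e
        exact hsurj N (fun x hx => hN x (Ideal.mem_sup_left hx)) (j+1) e
      obtain ⟨ψ, hψ⟩ := hcast _ (by omega) e
      have h0 : ψ.comp (Ext.mk₀ (sc (mulx I x) _ (mulx_exact I x)).f) (add_zero _) = 0 := by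
        have h1 := ext_smul_left (hN x (Ideal.mem_sup_right (Ideal.mem_span_singleton_self x))) ψ
        rw [Ext.smul_eq_comp_mk₀] at h1
        exact h1
      obtain ⟨φ, hφ⟩ := Ext.covariant_sequence_exact₁ _ hse ψ h0 rfl
      refine ⟨φ, ?_⟩
      rw [← hψ, ← hφ]
      exact (Ext.comp_assoc φ δ c rfl (add_comm 1 k) (by omega)).symm

end CMQ


namespace CMQ
variable {S : Type u} [CommRing S] [IsLocalRing S] [IsNoetherianRing S]

/-- the quotient `a / (a ∩ b)` -/
abbrev QQ (a b : Ideal S) : Type u := ↥a ⧸ Submodule.comap a.subtype b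

/-- the map `a/I → S/I` -/
abbrev iot (a I : Ideal S) : QQ a I →ₗ[S] (S ⧸ I) :=
  Submodule.mapQ (Submodule.comap a.subtype I) I a.subtype le_rfl

lemma iot_inj (a I : Ideal S) : Function.Injective (iot a I) := by
  rw [← LinearMap.ker_eq_bot, LinearMap.ker_eq_bot']
  intro y hy
  obtain ⟨y, rfl⟩ := Submodule.Quotient.mk_surjective _ y
  have : (y : S) ∈ I := (Submodule.Quotient.mk_eq_zero _).mp hy
  exact (Submodule.Quotient.mk_eq_zero _).mpr this

lemma iot_exact {a I : Ideal S} (h : I ≤ a) : Function.Exact (iot a I) (prj h) := by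
  intro y
  obtain ⟨y, rfl⟩ := Submodule.Quotient.mk_surjective _ y
  constructor
  · intro hy
    have : y ∈ a := (Submodule.Quotient.mk_eq_zero _).mp hy
    exact ⟨Submodule.Quotient.mk ⟨y, this⟩, rfl⟩
  · rintro ⟨w, hw⟩
    obtain ⟨w, rfl⟩ := Submodule.Quotient.mk_surjective _ w
    rw [← hw]
    exact (Submodule.Quotient.mk_eq_zero _).mpr w.2

lemma M_depth {a I : Ideal S} (h : I ≤ a) {n : ℕ} (hI : DepthGE S (S ⧸ I) n)
    (ha : DepthGE S (S ⧸ a) n) : DepthGE S (QQ a I) n := by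
  intro i hi
  cases i with
  | zero =>
    have h0 := (ext_zero_iff _ _).mp (hI 0 hi)
    rw [ext_zero_iff]
    refine subsingleton_of_forall_eq 0 fun f => ?_
    have : (iot a I).comp f = 0 := Subsingleton.elim _ _
    refine LinearMap.ext fun y => iot_inj a I ?_
    simpa using LinearMap.congr_fun this y
  | succ i =>
    exact ext_cov1 _ (iot_exact h) (iot_inj a I) (prj_surj h) (ha i (by omega)) (hI _ hi)

lemma theta {d r n : ℕ} (hd : DepthGE S S d)
    (hinj : ∀ i, d < i → Subsingleton (EX S (KK S) S i)) {a I : Ideal S} (hIa : I ≤ a)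
    (hCI : CI r I) (hn : n + r = d) (rs : List S) (hlen : n ≤ rs.length)
    (hm : ∀ r ∈ rs, r ∈ maximalIdeal S) (hr : IsWeaklyRegular (S ⧸ a) rs)
    (hM : Module.supportDim S (QQ a I) ≤ n) :
    ∃ Θ : S →ₗ[S] EX S (QQ a I) S r, Function.Surjective Θ ∧
      ∀ s, Θ s = 0 ↔ ∀ y : QQ a I, s • y = 0 := by
  obtain ⟨c, cinj, csurj⟩ := CI_class hd hCI
  let φι : EX S (QQ a I) (S ⧸ I) 0 := Ext.mk₀ (ModuleCat.ofHom (iot a I))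
  let γ : EX S (QQ a I) S r := φι.comp c (zero_add r)
  have cinj' : ∀ φ : EX S (QQ a I) (S ⧸ I) 0, φ.comp c (zero_add r) = 0 → φ = 0 := by
    intro φ hφ
    refine cinj _ n 0 hM (by omega) φ ?_
    have : ∀ (m : ℕ) (hm : 0 + r = m), φ.comp c hm = 0 → φ.comp c rfl = 0 := by
      rintro m rfl h; exact h
    exact this _ _ hφ
  have csurj' : ∀ e : EX S (S ⧸ I) S r, ∃ φ : EX S (S ⧸ I) (S ⧸ I) 0,
      φ.comp c (zero_add r) = e := by
    have : ∀ (m : ℕ) (hm : 0 + r = m) (e : EX S (S ⧸ I) S m),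
        ∃ φ : EX S (S ⧸ I) (S ⧸ I) 0, φ.comp c hm = e := by
      rintro m rfl e
      refine csurj _ ?_ 0 e
      intro x hx y
      obtain ⟨y, rfl⟩ := Submodule.Quotient.mk_surjective _ y
      exact (Submodule.Quotient.mk_eq_zero _).mpr (I.mul_mem_right _ hx)
    exact this _ _
  refine ⟨LinearMap.toSpanSingleton S _ γ, ?_, ?_⟩
  · intro e
    have hse := sc_shortExact (iot_exact hIa) (iot_inj a I) (prj_surj hIa)
    have : Subsingleton (EX S (S ⧸ a) S (1 + r)) := ab hinj rs (S ⧸ a) hm hr (by omega)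
    obtain ⟨e2, he2⟩ := Ext.contravariant_sequence_exact₁ hse _ e rfl
      (Subsingleton.elim (α := EX S (S ⧸ a) S (1 + r)) _ _)
    obtain ⟨φ, hφ⟩ := csurj' e2
    obtain ⟨ψ, rfl⟩ := (Ext.mk₀_bijective _ _).2 φ
    obtain ⟨s, hs⟩ := Submodule.Quotient.mk_surjective _ (ψ.hom (Submodule.Quotient.mk 1))
    have hψ : ψ = s • 𝟙 _ := by
      apply ModuleCat.hom_ext
      apply Submodule.linearMap_qext
      apply LinearMap.ext_ring
      change ψ.hom (Submodule.Quotient.mk 1) = s • (Submodule.Quotient.mk 1 : S ⧸ I)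
      rw [← hs, ← Submodule.Quotient.mk_smul]
      simp
    refine ⟨s, ?_⟩
    rw [LinearMap.toSpanSingleton_apply, ← he2, ← hφ, hψ, Ext.mk₀_smul, Ext.smul_comp,
      Ext.mk₀_id_comp, Ext.comp_smul]
  · intro s
    rw [LinearMap.toSpanSingleton_apply]
    constructor
    · intro h
      have h1 : s • φι = 0 := by
        apply cinj'
        rw [Ext.smul_comp]
        exact h
      have h2 : s • ModuleCat.ofHom (iot a I) = 0 := by
        apply (Ext.mk₀_bijective _ _).1
        rw [Ext.mk₀_smul, Ext.mk₀_zero]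
        exact h1
      intro y
      apply iot_inj a I
      rw [map_smul, map_zero]
      exact LinearMap.congr_fun (congrArg ModuleCat.Hom.hom h2) y
    · intro h
      exact ext_smul_left h γ

lemma core {d r n : ℕ} (hd' : ringKrullDim S = d) (hd : DepthGE S S d)
    (hinj : ∀ i, d < i → Subsingleton (EX S (KK S) S i)) {a b I : Ideal S} {g : S}
    (hCI : CI r I) (hb : b = I ⊔ Ideal.span {g}) (hba : b < a) (hn : n + 1 + r = d)
    (rs : List S) (hlen : n + 1 ≤ rs.length)
    (hm : ∀ r ∈ rs, r ∈ maximalIdeal S) (hr : IsWeaklyRegular (S ⧸ a) rs)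
    (hQ : Module.supportDim S (QQ a b) ≤ n) : DepthGE S (QQ a b) n := by
  have hIb : I ≤ b := hb ▸ le_sup_left
  have hIa : I ≤ a := hIb.trans hba.le
  have hga : g ∈ a := hba.le (hb ▸ Ideal.mem_sup_right (Ideal.mem_span_singleton_self g))
  have hgb : g ∈ b := hb ▸ Ideal.mem_sup_right (Ideal.mem_span_singleton_self g)
  have hdI : DepthGE S (S ⧸ I) (n + 1) := by
    have := CI_depth hd hCI
    rwa [show d - r = n + 1 by omega] at this
  have hda : DepthGE S (S ⧸ a) (n + 1) :=
    fun i hi => depthGE_of_wreg _ rs hm hr i (by omega)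
  have hdM : DepthGE S (QQ a I) (n + 1) := M_depth hIa hdI hda
  have hMdim : Module.supportDim S (QQ a I) ≤ (n + 1 : ℕ) := by
    refine (Module.supportDim_le_of_injective _ (iot_inj a I)).trans ?_
    have h1 := CI_dim hd' hCI
    rw [← hn] at h1
    generalize Module.supportDim S (S ⧸ I) = t at h1
    cases t with
    | bot => exact bot_le
    | coe t =>
      have h' : t + r ≤ ((n + 1 + r : ℕ) : ℕ∞) := by exact_mod_cast h1
      cases t with
      | top => simp at h'
      | coe t =>
        have : t + r ≤ n + 1 + r := by exact_mod_cast h'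
        have : t ≤ n + 1 := by omega
        exact_mod_cast this
  obtain ⟨Θ, hΘs, hΘk⟩ := theta hd hinj hIa hCI hn rs hlen hm hr hMdim
  -- the projection M → Q
  have hcc : Submodule.comap a.subtype I ≤ Submodule.comap a.subtype b := Submodule.comap_mono hIb
  let π : QQ a I →ₗ[S] QQ a b := Submodule.mapQ _ _ LinearMap.id hcc
  have hπ : Function.Surjective π := by
    intro y
    obtain ⟨y, rfl⟩ := Submodule.Quotient.mk_surjective _ y
    exact ⟨Submodule.Quotient.mk y, rfl⟩
  have hnt : Nontrivial (QQ a b) := by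
    rw [Submodule.Quotient.nontrivial_iff]
    intro h
    apply hba.not_ge
    intro x hx
    have : (⟨x, hx⟩ : a) ∈ Submodule.comap a.subtype b := h ▸ trivial
    exact this
  have hntM : Nontrivial (QQ a I) := hπ.nontrivial
  obtain ⟨rs', hlen', hm', hr'⟩ := exists_reg (QQ a I) hdM
  have hw := dual_wreg hinj hd rs' (QQ a I) hm' hr'.1 (by rw [hlen']; exact hMdim) (i := r)
    (by omega)
  let gM : QQ a I := Submodule.Quotient.mk ⟨g, hga⟩
  let T : S →ₗ[S] QQ a I := LinearMap.toSpanSingleton S _ gM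
  have hker : LinearMap.ker T = LinearMap.ker Θ := by
    ext s
    rw [LinearMap.mem_ker, LinearMap.mem_ker, hΘk, LinearMap.toSpanSingleton_apply]
    refine ⟨fun h => ?_, fun h => h _⟩
    have hsg : s * g ∈ I := (Submodule.Quotient.mk_eq_zero (Submodule.comap a.subtype I)
      (x := s • (⟨g, hga⟩ : ↥a))).mp h
    let w : ↥a →ₗ[S] (S ⧸ I) := s • (Submodule.mkQ I ∘ₗ a.subtype)
    have hw : Submodule.comap a.subtype b ≤ LinearMap.ker w := by
      intro x hx
      have hx' : (x : S) ∈ b := hx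
      rw [hb] at hx'
      obtain ⟨i, hi, z, hz, hiz⟩ := Submodule.mem_sup.mp hx'
      obtain ⟨t, rfl⟩ := Ideal.mem_span_singleton.mp hz
      refine (Submodule.Quotient.mk_eq_zero I (x := s * (x : S))).mpr ?_
      rw [← hiz, mul_add, ← mul_assoc]
      exact I.add_mem (I.mul_mem_left _ hi) (I.mul_mem_right _ hsg)
    have hsub : Subsingleton (QQ a b →ₗ[S] (S ⧸ I)) :=
      (ext_zero_iff _ _).mp (ischebeck hdI (QQ a b) hQ (by omega))
    have h0 : Submodule.liftQ _ w hw = 0 := Subsingleton.elim _ _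
    intro y
    obtain ⟨y, rfl⟩ := Submodule.Quotient.mk_surjective _ y
    have hy : w y = 0 := LinearMap.congr_fun h0 (Submodule.Quotient.mk y)
    have hy' : s * (y : S) ∈ I := (Submodule.Quotient.mk_eq_zero _).mp hy
    exact (Submodule.Quotient.mk_eq_zero _).mpr hy'
  let E : (S ⧸ LinearMap.ker T) ≃ₗ[S] EX S (QQ a I) S r :=
    (Submodule.quotEquivOfEq _ _ hker).trans (Θ.quotKerEquivOfSurjective hΘs)
  have hdT : DepthGE S (S ⧸ LinearMap.ker T) (n + 1) := by
    rw [← hlen']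
    exact depthGE_of_wreg _ rs' hm' ((E.isWeaklyRegular_congr rs').mpr hw)
  have hex : Function.Exact ((LinearMap.ker T).liftQ T le_rfl) π := by
    intro y
    obtain ⟨y, rfl⟩ := Submodule.Quotient.mk_surjective _ y
    constructor
    · intro hy
      have hy' : (y : S) ∈ b := (Submodule.Quotient.mk_eq_zero (Submodule.comap a.subtype b)).mp hy
      rw [hb] at hy'
      obtain ⟨i, hi, z, hz, hiz⟩ := Submodule.mem_sup.mp hy'
      obtain ⟨t, rfl⟩ := Ideal.mem_span_singleton.mp hz
      refine ⟨Submodule.Quotient.mk t, ?_⟩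
      change t • (Submodule.Quotient.mk ⟨g, hga⟩ : QQ a I) = _
      rw [← Submodule.Quotient.mk_smul, eq_comm, Submodule.Quotient.eq]
      change (y : S) - t * g ∈ I
      rw [← hiz, mul_comm t g]
      simpa using hi
    · rintro ⟨w, hw⟩
      obtain ⟨w, rfl⟩ := Submodule.Quotient.mk_surjective _ w
      rw [← hw]
      change π (w • (Submodule.Quotient.mk ⟨g, hga⟩ : QQ a I)) = _
      rw [map_smul]
      have : π (Submodule.Quotient.mk ⟨g, hga⟩ : QQ a I) = 0 :=
        (Submodule.Quotient.mk_eq_zero _).mpr hgb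
      rw [this, smul_zero]
  intro i hi
  exact ext_cov3 _ hex (LinearMap.ker_eq_bot.mp (Submodule.ker_liftQ_eq_bot _ _ _ le_rfl)) hπ
    (hdM i (by omega)) (hdT (i + 1) (by omega))

end CMQ


namespace CMQ
variable {S : Type u} [CommRing S] [IsLocalRing S] [IsNoetherianRing S]

lemma wb_add_le {t : WithBot ℕ∞} {r d : ℕ} (ht : t ≠ ⊥)
    (h : t + (r : WithBot ℕ∞) ≤ (d : WithBot ℕ∞)) : ∃ n : ℕ, t = n ∧ n + r ≤ d := by
  cases t with
  | bot => exact absurd rfl ht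
  | coe t =>
    have h' : t + r ≤ (d : ℕ∞) := by exact_mod_cast h
    cases t with
    | top => simp at h'
    | coe t => exact ⟨t, rfl, by exact_mod_cast h'⟩

lemma supportDim_le_of_forall (M : Type u) [AddCommGroup M] [Module S M] {N : WithBot ℕ∞}
    (h : ∀ p ∈ Module.support S M, ringKrullDim (S ⧸ p.asIdeal) ≤ N) :
    Module.supportDim S M ≤ N := by
  refine iSup_le fun l => ?_
  refine le_trans ?_ (h _ l.head.2)
  rw [ringKrullDim_quotient]
  let l' : LTSeries (PrimeSpectrum.zeroLocus ((l.head : PrimeSpectrum S).asIdeal : Set S)) :=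
    LTSeries.mk l.length (fun i => ⟨(l i).1, by
      have : l.head ≤ l i := LTSeries.head_le l i
      exact this⟩) (fun i j hij => l.strictMono hij)
  exact Order.LTSeries.length_le_krullDim l'

lemma ringKrullDim_ne_bot' (R : Type u) [CommRing R] [Nontrivial R] : ringKrullDim R ≠ ⊥ := by
  intro h
  have := ringKrullDim_nonneg_of_nontrivial (R := R)
  rw [h] at this
  exact absurd this (by simp)

lemma choose_seq {d r : ℕ} (hd : DepthGE S S d) {b : Ideal S} (hbm : b ≤ maximalIdeal S)
    (H : ∀ (P : Ideal S) [P.IsPrime], (d : WithBot ℕ∞) < ringKrullDim (S ⧸ P) + (r : WithBot ℕ∞) →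
      ¬ b ≤ P) (v : Fin (r + 1) → S) (hv : b = Ideal.span (Set.range v)) (k : ℕ) :
    ∀ n, k + n = r + 1 → k ≤ r → ∃ I : Ideal S, CI k I ∧ ∃ w : Fin n → S,
      b = I ⊔ Ideal.span (Set.range w) := by
  induction k with
  | zero =>
    intro n hn _
    obtain rfl : n = r + 1 := by omega
    exact ⟨⊥, CI.zero, v, by simp [hv]⟩
  | succ k ih =>
    intro n hn hk
    obtain ⟨I, hI, w, hw⟩ := ih (n + 1) (by omega) (by omega)
    let J := Ideal.span (Set.range (fun i : Fin n => w i.succ))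
    have hJ : b = I ⊔ (Ideal.span {w 0} ⊔ J) := by
      rw [hw, ← Ideal.span_union]
      congr 2
      ext z
      simp only [Set.mem_range, Fin.exists_fin_succ, Set.mem_union, Set.mem_singleton_iff]
      tauto
    obtain ⟨y, hyJ, hy⟩ := coset_avoid (associatedPrimes.finite S (S ⧸ I)).toFinset
      (fun P hP => ((Set.Finite.mem_toFinset _).mp hP).1) (w 0) J (by
        intro P hP hvP hJP
        have hP' : IsAssociatedPrime P (S ⧸ I) := (Set.Finite.mem_toFinset _).mp hP
        obtain ⟨hPp, f, hf⟩ := (isAssociatedPrime_iff_exists_injective_linearMap _ _).mp hP'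
        have hIP : I ≤ P := by
          have := hP'.annihilator_le
          rwa [Submodule.annihilator_top, Ideal.annihilator_quotient] at this
        refine H P ?_ (by
          rw [hJ]; exact sup_le hIP (sup_le ((Ideal.span_singleton_le_iff_mem _).mpr hvP) hJP))
        by_contra hlt
        have hnt : Nontrivial (S ⧸ P) := Ideal.Quotient.nontrivial_iff.mpr hPp.ne_top
        obtain ⟨m, hm, hmr⟩ := wb_add_le (ringKrullDim_ne_bot' (S ⧸ P)) (not_lt.mp hlt)
        have hs : Subsingleton ((S ⧸ P) →ₗ[S] (S ⧸ I)) :=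
          (ext_zero_iff _ _).mp (ischebeck (CI_depth hd hI) (S ⧸ P) (n := m)
            (by rw [Module.supportDim_quotient_eq_ringKrullDim, hm]) (by omega))
        have hf0 : f = 0 := Subsingleton.elim _ _
        obtain ⟨z, hz⟩ := exists_ne (0 : S ⧸ P)
        exact hz (hf (by simp [hf0])))
    set x := w 0 + y with hx
    have hmx : Ideal.span {w 0} ⊔ J = Ideal.span {x} ⊔ J := by
      apply le_antisymm
      · refine sup_le ?_ le_sup_right
        rw [Ideal.span_singleton_le_iff_mem, show w 0 = x + -y by simp [hx]]
        exact Submodule.add_mem_sup (Ideal.mem_span_singleton_self x) (neg_mem hyJ)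
      · refine sup_le ?_ le_sup_right
        rw [Ideal.span_singleton_le_iff_mem]
        exact Submodule.add_mem_sup (Ideal.mem_span_singleton_self _) hyJ
    rw [hmx, ← sup_assoc] at hJ
    refine ⟨I ⊔ Ideal.span {x}, CI.succ k I x hI ?_ ?_, _, hJ⟩
    · by_contra hreg
      have : x ∈ ⋃ p ∈ associatedPrimes S (S ⧸ I), (p : Set S) := by
        rw [biUnion_associatedPrimes_eq_compl_regular]; exact hreg
      simp only [Set.mem_iUnion] at this
      obtain ⟨P, hP, hxP⟩ := this
      exact hy P ((Set.Finite.mem_toFinset _).mpr hP) hxP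
    · apply hbm
      rw [hJ]
      exact Ideal.mem_sup_left (Ideal.mem_sup_right (Ideal.mem_span_singleton_self x))

lemma main (hregular : ∃ v : Finset S, Ideal.span (v : Set S) = maximalIdeal S ∧
      (v.card : WithBot ℕ∞) = ringKrullDim S)
    (r : ℕ) (a b : Ideal S)
    (hCM : (moduleDepth S (S ⧸ a) : WithBot ℕ∞) = ringKrullDim (S ⧸ a))
    (hdima : ringKrullDim (S ⧸ a) + (r : WithBot ℕ∞) = ringKrullDim S)
    (hbgen : ∃ v : Fin (r + 1) → S, b = Ideal.span (Set.range v))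
    (hba : b < a)
    (hloc : ∀ (q : Ideal S) [q.IsPrime],
      ringKrullDim S < ringKrullDim (S ⧸ q) + ((r + 1 : ℕ) : WithBot ℕ∞) →
      Ideal.map (algebraMap S (Localization.AtPrime q)) a =
        Ideal.map (algebraMap S (Localization.AtPrime q)) b) :
    (moduleDepth S (QQ a b) : WithBot ℕ∞) = Module.supportDim S (QQ a b) ∧
      Module.supportDim S (QQ a b) + ((r + 1 : ℕ) : WithBot ℕ∞) = ringKrullDim S := by
  obtain ⟨d, hd', hd, hinj⟩ := reg_facts S hregular
  have hloc' : ∀ (q : Ideal S) [q.IsPrime],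
      (d : WithBot ℕ∞) < ringKrullDim (S ⧸ q) + ((r + 1 : ℕ) : WithBot ℕ∞) →
      ∀ x ∈ a, ∃ s ∉ q, s * x ∈ b := by
    intro q _ hq x hx
    have h := hloc q (by rwa [hd'])
    have hx' := Ideal.mem_map_of_mem (algebraMap S (Localization.AtPrime q)) hx
    rw [h, IsLocalization.algebraMap_mem_map_algebraMap_iff q.primeCompl] at hx'
    exact hx'
  rw [hd'] at hdima ⊢
  have hane : ringKrullDim (S ⧸ a) ≠ ⊥ := by
    intro h
    rw [h, WithBot.bot_add] at hdima
    exact WithBot.natCast_ne_bot _ hdima.symm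
  have hatop : a ≠ ⊤ := by
    rintro rfl
    have : Subsingleton (S ⧸ (⊤ : Ideal S)) := Ideal.Quotient.subsingleton_iff.mpr rfl
    exact hane ringKrullDim_eq_bot_of_subsingleton
  have ham : a ≤ maximalIdeal S := le_maximalIdeal hatop
  obtain ⟨e, he, -⟩ := wb_add_le hane hdima.le
  have her : e + r = d := by rw [he] at hdima; exact_mod_cast hdima
  have H : ∀ (P : Ideal S) [P.IsPrime],
      (d : WithBot ℕ∞) < ringKrullDim (S ⧸ P) + (r : WithBot ℕ∞) → ¬ b ≤ P := by
    intro P hP hlt hbP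
    have haP : a ≤ P := by
      intro x hx
      obtain ⟨s, hs, hsx⟩ := hloc' P (lt_of_lt_of_le hlt (by gcongr; omega)) x hx
      exact (hP.mem_or_mem (hbP hsx)).resolve_left hs
    have := ringKrullDim_le_of_surjective (Ideal.Quotient.factor haP)
      (Ideal.Quotient.factor_surjective haP)
    refine hlt.not_ge ?_
    rw [← hdima]
    gcongr
  have hnt : Nontrivial (QQ a b) := by
    rw [Submodule.Quotient.nontrivial_iff]
    intro h
    apply hba.not_ge
    intro x hx
    have : (⟨x, hx⟩ : a) ∈ Submodule.comap a.subtype b := h ▸ trivial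
    exact this
  have hsup : ∀ p ∈ Module.support S (QQ a b),
      ringKrullDim (S ⧸ p.asIdeal) + ((r + 1 : ℕ) : WithBot ℕ∞) ≤ d := by
    intro p hp
    by_contra hlt
    have h := hloc' p.asIdeal (not_le.mp hlt)
    refine Module.notMem_support_iff'.mpr ?_ hp
    intro m
    obtain ⟨m, rfl⟩ := Submodule.Quotient.mk_surjective _ m
    obtain ⟨s, hs, hsx⟩ := h m m.2
    exact ⟨s, hs, (Submodule.Quotient.mk_eq_zero (Submodule.comap a.subtype b)
      (x := s • m)).mpr hsx⟩
  have hex : ∀ p ∈ Module.support S (QQ a b), ∃ m : ℕ, ringKrullDim (S ⧸ p.asIdeal) = m ∧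
      m + (r + 1) ≤ d := by
    intro p hp
    have : Nontrivial (S ⧸ p.asIdeal) := Ideal.Quotient.nontrivial_iff.mpr p.2.ne_top
    exact wb_add_le (ringKrullDim_ne_bot' _) (hsup p hp)
  obtain ⟨p0, hp0⟩ := (Module.nonempty_support_iff (R := S) (M := QQ a b)).mpr hnt
  obtain ⟨m0, -, hm0⟩ := hex p0 hp0
  obtain ⟨n, hn⟩ : ∃ n, n + 1 + r = d := ⟨d - r - 1, by omega⟩
  have hQ : Module.supportDim S (QQ a b) ≤ n := by
    refine supportDim_le_of_forall _ fun p hp => ?_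
    obtain ⟨m, hm, hmr⟩ := hex p hp
    rw [hm]
    have : m ≤ n := by omega
    exact_mod_cast this
  obtain ⟨v, hv⟩ := hbgen
  obtain ⟨I, hCI, w, hw⟩ := choose_seq hd (hba.le.trans ham) H v hv r 1 rfl le_rfl
  have hb : b = I ⊔ Ideal.span {w 0} := by
    rw [hw]
    congr 2
    ext z
    simp [Set.mem_range, Fin.exists_fin_one, eq_comm]
  obtain ⟨rs, hlen, hm, hr⟩ : ∃ rs : List S, n + 1 ≤ rs.length ∧
      (∀ r ∈ rs, r ∈ maximalIdeal S) ∧ IsWeaklyRegular (S ⧸ a) rs := by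
    by_contra hno
    push Not at hno
    have h1 : moduleDepth S (S ⧸ a) ≤ n := by
      refine sSup_le ?_
      rintro _ ⟨rs, rfl, hm, hr⟩
      have : rs.length ≤ n := by
        by_contra hlt
        exact hno rs (by omega) hm hr.1
      exact_mod_cast this
    have h2 : moduleDepth S (S ⧸ a) = (e : ℕ∞) := by
      rw [he] at hCM; exact_mod_cast hCM
    rw [h2] at h1
    have : e ≤ n := by exact_mod_cast h1
    omega
  have hdQ := core hd' hd hinj hCI hb hba hn rs hlen hm hr hQ
  obtain ⟨qs, hql, hqm, hqr⟩ := exists_reg (QQ a b) hdQ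
  have hlb : ∀ (qs : List S), IsRegular (QQ a b) qs →
      (qs.length : WithBot ℕ∞) ≤ Module.supportDim S (QQ a b) := by
    intro qs hqr
    rw [← Module.supportDim_add_length_eq_supportDim_of_isRegular qs hqr]
    have : Nontrivial (QQ a b ⧸ (Ideal.ofList qs • ⊤ : Submodule S (QQ a b))) :=
      Submodule.Quotient.nontrivial_iff.mpr hqr.2.symm
    exact le_add_of_nonneg_left (wb_zero_le (Module.supportDim_ne_bot_of_nontrivial _ _))
  have hdim : Module.supportDim S (QQ a b) = n := le_antisymm hQ (hql ▸ hlb qs hqr)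
  have hdep : moduleDepth S (QQ a b) = n := by
    apply le_antisymm
    · refine sSup_le ?_
      rintro _ ⟨rs, rfl, hm, hr⟩
      have := hlb rs hr
      rw [hdim] at this
      exact_mod_cast this
    · exact le_sSup ⟨qs, by rw [hql], hqm, hqr⟩
  rw [hdep, hdim]
  refine ⟨rfl, ?_⟩
  rw [← hn]
  push_cast
  ring

end CMQ

theorem stmt_0 {S : Type*} [CommRing S] [IsLocalRing S] [IsNoetherianRing S]
    (hregular : ∃ v : Finset S, Ideal.span (v : Set S) = maximalIdeal S ∧
      (v.card : WithBot ℕ∞) = Order.krullDim (PrimeSpectrum S))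
    (r : ℕ) (hr : 1 ≤ r) (a b : Ideal S)
    (hCM : (moduleDepth S (S ⧸ a) : WithBot ℕ∞) = Order.krullDim (PrimeSpectrum (S ⧸ a)))
    (hdima : Order.krullDim (PrimeSpectrum (S ⧸ a)) + (r : WithBot ℕ∞) = Order.krullDim (PrimeSpectrum S))
    (hbgen : ∃ v : Fin (r + 1) → S, b = Ideal.span (Set.range v))
    (hba : b < a)
    (hloc : ∀ (q : Ideal S) [q.IsPrime],
      Order.krullDim (PrimeSpectrum S) < Order.krullDim (PrimeSpectrum (S ⧸ q)) + ((r + 1 : ℕ) : WithBot ℕ∞) →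
      Ideal.map (algebraMap S (Localization.AtPrime q)) a =
        Ideal.map (algebraMap S (Localization.AtPrime q)) b) :
    (moduleDepth S (↥a ⧸ Submodule.comap a.subtype b) : WithBot ℕ∞) =
        Order.krullDim ↥(Module.support S (↥a ⧸ Submodule.comap a.subtype b)) ∧
      Order.krullDim ↥(Module.support S (↥a ⧸ Submodule.comap a.subtype b)) + ((r + 1 : ℕ) : WithBot ℕ∞) = Order.krullDim (PrimeSpectrum S) := by
  exact CMQ.main hregular r a b hCM hdima hbgen hba hloc
end

section
/- Let S be a commutative ring, let c ⊆ a be ideals of S, and let x ∈ a. If x is a non-zerodivisor on the quotient ring S/(c : a), then the colon ideals satisfy (c : a) = (c : (c + ⟨x⟩)). -/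
/-- Let `S` be a commutative ring, `c ⊆ a` ideals of `S`, and `x ∈ a`.
If `x` is a non-zerodivisor on `S/(c : a)`, then `(c : a) = (c : (c + ⟨x⟩))`. -/
theorem stmt_1 {S : Type*} [CommRing S] (c a : Ideal S) (hca : c ≤ a) (x : S) (hx : x ∈ a)
    (hreg : IsSMulRegular (S ⧸ c.colon a) x) :
    c.colon a = c.colon (c ⊔ Ideal.span {x}) := by
  have hxa : Ideal.span {x} ≤ a := (Ideal.span_singleton_le_iff_mem a).2 hx
  apply le_antisymm
  · intro s hs
    rw [Submodule.mem_colon] at hs ⊢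
    intro p hp
    apply hs
    first
      | exact (sup_le hca hxa) hp
      | exact (Set.union_subset hca hxa) hp
  · intro s hs
    rw [Submodule.mem_colon] at hs
    have h1 : s * x ∈ c := hs x (by
      first
        | exact Ideal.mem_sup_right (Ideal.mem_span_singleton_self x)
        | exact Or.inr (Ideal.mem_span_singleton_self x))
    have h2 : x * s ∈ c.colon (a : Set S) := by
      rw [Submodule.mem_colon]
      intro y _
      rw [smul_eq_mul, mul_comm x s]
      exact c.mul_mem_right y h1
    rw [← Ideal.Quotient.eq_zero_iff_mem]
    apply hreg
    show x • Ideal.Quotient.mk _ s = x • (0 : S ⧸ c.colon (a : Set S))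
    rw [smul_zero]
    exact Ideal.Quotient.eq_zero_iff_mem.2 h2
end

section
/- Let (S, m) be a Noetherian local ring, let p ⊆ S be a prime ideal with p ≠ m, and let J ⊆ p be an ideal with dim(S/J) ≤ 1. Let J^gen = { g ∈ S : there exists s ∈ S \ p with s·g ∈ J } be the p-saturation of J. Then the quotient S/J^gen is a Cohen–Macaulay local ring of Krull dimension 1 (its depth and its Krull dimension both equal 1). -/
open IsLocalRing

/-- Let `(S, m)` be a Noetherian local ring, `p` a prime ideal with
`p ≠ m`, and `J ⊆ p` an ideal with `dim (S/J) ≤ 1`. Then `S/J^gen` is Cohen–Macaulay of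
Krull dimension `1`: its depth and Krull dimension both equal `1`, where `J^gen` is the
`p`-saturation of `J`. -/
theorem stmt_5 {S : Type*} [CommRing S] [IsLocalRing S] [IsNoetherianRing S]
    (p : Ideal S) (hp : p.IsPrime) (hpm : p ≠ maximalIdeal S)
    (J : Ideal S) (hJp : J ≤ p)
    (hdimJ : Order.krullDim (PrimeSpectrum (S ⧸ J)) ≤ 1)
    (Jgen : Ideal S) (hgen : ∀ g : S, g ∈ Jgen ↔ ∃ s ∉ p, s * g ∈ J) :
    moduleDepth S (S ⧸ Jgen) = 1 ∧ Order.krullDim (PrimeSpectrum (S ⧸ Jgen)) = 1 := by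
  classical
  have hlen : ∀ rs : List S, RingTheory.Sequence.IsRegular (S ⧸ Jgen) rs →
      (rs.length : WithBot ℕ∞) ≤ ringKrullDim (S ⧸ Jgen) := by
    intro rs hrs
    rw [← Module.supportDim_quotient_eq_ringKrullDim,
      ← Module.supportDim_add_length_eq_supportDim_of_isRegular rs hrs]
    have := hrs.quot_ofList_smul_nontrivial ⊤
    have hne := Module.supportDim_ne_bot_of_nontrivial S
      ((S ⧸ Jgen) ⧸ Ideal.ofList rs • (⊤ : Submodule S (S ⧸ Jgen)))
    generalize Module.supportDim S
      ((S ⧸ Jgen) ⧸ Ideal.ofList rs • (⊤ : Submodule S (S ⧸ Jgen))) = d at hne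
    obtain ⟨e, rfl⟩ := WithBot.ne_bot_iff_exists.mp hne
    exact_mod_cast le_add_self
  have hJ : J ≤ Jgen := fun g hg =>
    (hgen g).2 ⟨1, fun h => hp.ne_top ((Ideal.eq_top_iff_one p).2 h), by simpa using hg⟩
  have hgp : Jgen ≤ p := by
    intro g hg
    obtain ⟨s, hs, hsg⟩ := (hgen g).1 hg
    exact (hp.mem_or_mem (hJp hsg)).resolve_left hs
  have : Nontrivial (S ⧸ Jgen) :=
    Ideal.Quotient.nontrivial_iff.mpr (fun h => hp.ne_top (top_le_iff.1 (h ▸ hgp)))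
  have hle : ringKrullDim (S ⧸ Jgen) ≤ 1 :=
    (ringKrullDim_le_of_surjective (Ideal.Quotient.factor hJ)
      (Ideal.Quotient.factor_surjective hJ)).trans hdimJ
  obtain ⟨x, hxm, hxp⟩ : ∃ x ∈ maximalIdeal S, x ∉ p := by
    by_contra! h
    exact hpm (le_antisymm (le_maximalIdeal hp.ne_top) h)
  have hmem : ∀ r ∈ [x], r ∈ maximalIdeal S := by simpa using hxm
  have hreg : RingTheory.Sequence.IsRegular (S ⧸ Jgen) [x] := by
    rw [IsLocalRing.isRegular_iff_isWeaklyRegular_of_subset_maximalIdeal hmem,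
      RingTheory.Sequence.isWeaklyRegular_singleton_iff,
      isSMulRegular_iff_right_eq_zero_of_smul]
    intro m hm
    obtain ⟨g, rfl⟩ := Ideal.Quotient.mk_surjective m
    have h1 : Ideal.Quotient.mk Jgen (x * g) = 0 := hm
    rw [Ideal.Quotient.eq_zero_iff_mem, hgen] at h1
    obtain ⟨s, hs, hsg⟩ := h1
    rw [Ideal.Quotient.eq_zero_iff_mem, hgen]
    exact ⟨s * x, fun h => (hp.mem_or_mem h).elim hs hxp, by rwa [mul_assoc]⟩
  refine ⟨le_antisymm (sSup_le ?_) (le_sSup ⟨[x], by simp, hmem, hreg⟩),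
    le_antisymm hle (by simpa [ringKrullDim] using hlen [x] hreg)⟩
  rintro n ⟨rs, rfl, -, hrs⟩
  have := (hlen rs hrs).trans hle
  exact_mod_cast this
end

section
/- Let (S, m) be a Noetherian local ring, let p ⊆ S be a prime ideal with dim(S/p) = 1, and let J ⊆ S be an ideal with radical √J = p. Let J^gen = { g ∈ S : there exists s ∈ S \ p with s·g ∈ J } be the p-saturation of J. If a is any ideal with J ⊆ a such that S/a is a Cohen–Macaulay local ring of Krull dimension 1, then J^gen ⊆ a. In other words, J^gen is the smallest ideal containing J whose quotient ring is Cohen–Macaulay of dimension 1. -/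
open IsLocalRing

/-- Let `(S, m)` be a Noetherian local ring, `p` a prime ideal with
`dim (S/p) = 1`, and `J` an ideal with `√J = p`. If `a ⊇ J` is any ideal such that `S/a`
is a Cohen–Macaulay local ring of Krull dimension `1` (depth and dimension both `1`), then
`J^gen ⊆ a`, where `J^gen` is the `p`-saturation of `J`. -/
theorem stmt_6 {S : Type*} [CommRing S] [IsLocalRing S] [IsNoetherianRing S]
    (p : Ideal S) (hp : p.IsPrime)
    (hdimp : Order.krullDim (PrimeSpectrum (S ⧸ p)) = 1)
    (J : Ideal S) (hrad : J.radical = p)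
    (Jgen : Ideal S) (hgen : ∀ g : S, g ∈ Jgen ↔ ∃ s ∉ p, s * g ∈ J) :
    ∀ a : Ideal S, J ≤ a →
      moduleDepth S (S ⧸ a) = 1 → Order.krullDim (PrimeSpectrum (S ⧸ a)) = 1 →
      Jgen ≤ a := by
  intro a hJa hdep _ g hg
  obtain ⟨s, hs, hsg⟩ := (hgen g).1 hg
  obtain ⟨x, hxm, hx⟩ : ∃ x ∈ maximalIdeal S, IsSMulRegular (S ⧸ a) x := by
    by_contra! hcon
    have h0 : moduleDepth S (S ⧸ a) ≤ 0 := by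
      refine sSup_le ?_
      rintro n ⟨rs, rfl, hm, hreg⟩
      cases rs with
      | nil => simp
      | cons x rs =>
        exact absurd ((RingTheory.Sequence.isRegular_cons_iff _ _ _).1 hreg).1
          (hcon x (hm x (by simp)))
    rw [hdep] at h0
    simp at h0
  have hxr : x ∈ (J ⊔ Ideal.span {s}).radical := by
    rw [Ideal.radical_eq_sInf, Ideal.mem_sInf]
    rintro q ⟨hq, hqp⟩
    have hJq : J ≤ q := le_sup_left.trans hq
    have hsq : s ∈ q := hq (Ideal.mem_sup_right (Ideal.mem_span_singleton_self s))
    have hpq : p ≤ q := hrad ▸ hqp.radical_le_iff.2 hJq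
    by_contra hxq
    have hqm : q ≤ maximalIdeal S := le_maximalIdeal hqp.ne_top
    let f : PrimeSpectrum (S ⧸ p) ≃o _ := Ideal.primeSpectrumQuotientOrderIsoZeroLocus p
    let P : PrimeSpectrum.zeroLocus (R := S) p := ⟨⟨p, hp⟩, le_refl p⟩
    let Q : PrimeSpectrum.zeroLocus (R := S) p := ⟨⟨q, hqp⟩, hpq⟩
    let M : PrimeSpectrum.zeroLocus (R := S) p := ⟨⟨maximalIdeal S, inferInstance⟩, hpq.trans hqm⟩
    have h1 : P < Q := lt_of_le_not_ge hpq (fun h => hs (h hsq))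
    have h2 : Q < M := lt_of_le_not_ge hqm (fun h => hxq (h hxm))
    rw [Order.krullDim_eq_of_orderIso f] at hdimp
    let c : LTSeries (PrimeSpectrum.zeroLocus (R := S) p) :=
      { length := 2
        toFun := ![P, Q, M]
        step := by
          intro i
          fin_cases i
          · exact h1
          · exact h2 }
    have hc : ((2 : ℕ) : WithBot ℕ∞) ≤ _ := Order.LTSeries.length_le_krullDim c
    rw [hdimp] at hc
    have hc' : (2 : ℕ) ≤ 1 := by exact_mod_cast hc
    omega
  obtain ⟨n, hn⟩ := hxr
  obtain ⟨j, hj, t, ht, hjt⟩ := Submodule.mem_sup.1 hn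
  obtain ⟨c, rfl⟩ := Ideal.mem_span_singleton'.1 ht
  have hmem : x ^ n * g ∈ a := by
    rw [← hjt, add_mul, mul_assoc]
    exact a.add_mem (a.mul_mem_right _ (hJa hj)) (a.mul_mem_left _ (hJa hsg))
  have hr := hx.pow n
  rw [← Ideal.Quotient.eq_zero_iff_mem]
  apply hr
  simp only [smul_zero]
  exact Ideal.Quotient.eq_zero_iff_mem.2 hmem
end

section
/- Let (S, m) be a Noetherian local ring, let p ⊆ S be a prime ideal with dim(S/p) = 1, and let J ⊆ S be an ideal with radical √J = p. Let J^gen = { g ∈ S : there exists s ∈ S \ p with s·g ∈ J } be the p-saturation of J. Then J = J^gen if and only if the quotient S/J is a Cohen–Macaulay local ring of Krull dimension 1. -/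
open IsLocalRing

/-- Let `(S, m)` be a Noetherian local ring, `p` a prime ideal with
`dim (S/p) = 1`, and `J` an ideal with `√J = p`. Then `J = J^gen` if and only if `S/J` is
a Cohen–Macaulay local ring of Krull dimension `1` (depth and dimension both `1`), where
`J^gen` is the `p`-saturation of `J`. -/
theorem stmt_8 {S : Type*} [CommRing S] [IsLocalRing S] [IsNoetherianRing S]
    (p : Ideal S) (hp : p.IsPrime)
    (hdimp : Order.krullDim (PrimeSpectrum (S ⧸ p)) = 1)
    (J : Ideal S) (hrad : J.radical = p)
    (Jgen : Ideal S) (hgen : ∀ g : S, g ∈ Jgen ↔ ∃ s ∉ p, s * g ∈ J) :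
    J = Jgen ↔
      (moduleDepth S (S ⧸ J) = 1 ∧ Order.krullDim (PrimeSpectrum (S ⧸ J)) = 1) := by
  have hZ : Order.krullDim (PrimeSpectrum.zeroLocus (R := S) p) = 1 := by
    rw [← ringKrullDim_quotient]; exact hdimp
  have hdimJ : ringKrullDim (S ⧸ J) = 1 := by
    rw [ringKrullDim_quotient, ← PrimeSpectrum.zeroLocus_radical, hrad]; exact hZ
  have hJp : J ≤ p := hrad ▸ Ideal.le_radical
  have hJtop : J ≠ ⊤ := fun h => hp.ne_top (top_le_iff.mp (h ▸ hJp))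
  have hnt : Nontrivial (S ⧸ J) := Ideal.Quotient.nontrivial_iff.mpr hJtop
  have hJgen : J ≤ Jgen := fun g hg =>
    (hgen g).2 ⟨1, fun h => hp.ne_top ((Ideal.eq_top_iff_one _).2 h), by simpa using hg⟩
  have hpm : p ≤ maximalIdeal S := le_maximalIdeal hp.ne_top
  -- every regular sequence has length at most one
  have hle : ∀ rs : List S, RingTheory.Sequence.IsRegular (S ⧸ J) rs → rs.length ≤ 1 := by
    intro rs hrs
    have h := Module.supportDim_add_length_eq_supportDim_of_isRegular rs hrs
    rw [Module.supportDim_quotient_eq_ringKrullDim, hdimJ] at h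
    have hnt' : Nontrivial ((S ⧸ J) ⧸ Ideal.ofList rs • (⊤ : Submodule S (S ⧸ J))) :=
      Submodule.Quotient.nontrivial_iff.mpr (Ne.symm hrs.top_ne_smul)
    have h0 := Module.supportDim_ne_bot_of_nontrivial S
      ((S ⧸ J) ⧸ Ideal.ofList rs • (⊤ : Submodule S (S ⧸ J)))
    generalize Module.supportDim S
      ((S ⧸ J) ⧸ Ideal.ofList rs • (⊤ : Submodule S (S ⧸ J))) = d at h h0
    induction d with
    | bot => exact absurd rfl h0
    | coe d =>
      have h2 : d + (rs.length : ℕ∞) = 1 := by exact_mod_cast h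
      have h3 : (rs.length : ℕ∞) ≤ 1 := h2 ▸ le_add_self
      exact_mod_cast h3
  -- regularity of an element on the quotient
  have hreg : ∀ x : S, IsSMulRegular (S ⧸ J) x ↔ ∀ g, x * g ∈ J → g ∈ J := by
    intro x
    rw [isSMulRegular_iff_right_eq_zero_of_smul]
    constructor
    · intro h g hg
      rw [← Ideal.Quotient.eq_zero_iff_mem]
      apply h
      rw [← Ideal.Quotient.eq_zero_iff_mem] at hg
      rw [← hg]; rfl
    · intro h m hm
      obtain ⟨g, rfl⟩ := Ideal.Quotient.mk_surjective m
      rw [Ideal.Quotient.eq_zero_iff_mem]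
      apply h
      rw [← Ideal.Quotient.eq_zero_iff_mem, ← hm]; rfl
  constructor
  · intro hJ
    refine ⟨le_antisymm (sSup_le ?_) (le_sSup ?_), hdimJ⟩
    · rintro n ⟨rs, rfl, -, hrs⟩
      exact_mod_cast hle rs hrs
    · have hne : ¬ maximalIdeal S ≤ p := by
        intro h
        have he : p = maximalIdeal S := le_antisymm hpm h
        have h0 : Order.krullDim (PrimeSpectrum.zeroLocus (R := S) p) ≤ 0 := by
          rw [he, PrimeSpectrum.zeroLocus_eq_singleton]
          exact Order.krullDim_nonpos_of_subsingleton
        rw [hZ] at h0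
        exact absurd h0 (by decide)
      obtain ⟨x, hxm, hxp⟩ := SetLike.not_le_iff_exists.mp hne
      refine ⟨[x], by simp, by simpa using hxm, ?_⟩
      rw [IsLocalRing.isRegular_iff_isWeaklyRegular_of_subset_maximalIdeal (by simpa using hxm),
        RingTheory.Sequence.isWeaklyRegular_singleton_iff, hreg]
      intro g hg
      rw [hJ]
      exact (hgen g).2 ⟨x, hxp, hg⟩
  · rintro ⟨hdep, -⟩
    obtain ⟨x, hxm, hx⟩ : ∃ x ∈ maximalIdeal S, IsSMulRegular (S ⧸ J) x := by
      by_contra! hcon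
      have h0 : moduleDepth S (S ⧸ J) ≤ 0 := by
        refine sSup_le ?_
        rintro n ⟨rs, rfl, hm, hrs⟩
        cases rs with
        | nil => simp
        | cons x rs =>
          exact absurd ((RingTheory.Sequence.isRegular_cons_iff _ _ _).1 hrs).1
            (hcon x (hm x (by simp)))
      rw [hdep] at h0
      simp at h0
    refine le_antisymm hJgen fun g hg => ?_
    obtain ⟨s, hs, hsg⟩ := (hgen g).1 hg
    have hxr : x ∈ (J ⊔ Ideal.span {s}).radical := by
      rw [Ideal.radical_eq_sInf, Ideal.mem_sInf]
      rintro q ⟨hq, hqp⟩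
      have hJq : J ≤ q := le_sup_left.trans hq
      have hsq : s ∈ q := hq (Ideal.mem_sup_right (Ideal.mem_span_singleton_self s))
      have hpq : p ≤ q := hrad ▸ hqp.radical_le_iff.2 hJq
      rcases Order.krullDim_le_one_iff.1 hZ.le ⟨⟨q, hqp⟩, hpq⟩ with h | h
      · have h1 := h (b := ⟨⟨p, hp⟩, le_refl p⟩) hpq
        exact absurd (h1 hsq) hs
      · have h1 := h (b := ⟨⟨maximalIdeal S, inferInstance⟩, hpm⟩) (le_maximalIdeal hqp.ne_top)
        exact h1 hxm
    obtain ⟨n, hn⟩ := hxr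
    obtain ⟨j, hj, t, ht, hjt⟩ := Submodule.mem_sup.1 hn
    obtain ⟨a, rfl⟩ := Ideal.mem_span_singleton'.1 ht
    refine (hreg (x ^ n)).1 (hx.pow n) g ?_
    rw [← hjt, add_mul, mul_assoc]
    exact J.add_mem (J.mul_mem_right _ hj) (J.mul_mem_left _ hsg)
end

section
/- Let R be a commutative ring, let p ⊆ R be a prime ideal, and let t ∈ R be an element such that the principal ideal ⟨t⟩ is prime. Let a ⊆ R be an ideal with a minimal primary decomposition a = q₁ ∩ … ∩ q_k, with radicals p_i = √q_i, ordered so that q₁, …, q_l ⊆ p and q_{l+1}, …, q_k ⊄ p; set b = q₁ ∩ … ∩ q_l (with b = R if l = 0). Then the intersection ∩_{i=l+1}^k p_i (interpreted as R if l = k) is not contained in p ∪ ⟨t⟩ if and only if for every r ∈ b there exists s ∈ R \ (p ∪ ⟨t⟩) with s·r ∈ a. -/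
theorem aux_prime_iInf {R : Type*} [CommRing R] {k : ℕ} (P : Ideal R) (hP : P.IsPrime)
    (S : Fin k → Prop) (f : Fin k → Ideal R)
    (h : (⨅ i ∈ {i : Fin k | S i}, f i) ≤ P) : ∃ i, S i ∧ f i ≤ P := by
  classical
  have h2 : (Finset.univ.filter S).inf f ≤ P := by
    rw [Finset.inf_eq_iInf]
    simpa using h
  obtain ⟨i, hi, hle⟩ := (Ideal.IsPrime.inf_le' hP).1 h2
  exact ⟨i, by simpa using hi, hle⟩

/-- Let `R` be a commutative ring, `p` a prime ideal, and `t ∈ R` with `⟨t⟩`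
prime. Let `a = q₁ ∩ … ∩ q_k` be a minimal primary decomposition with radicals `p_i = √q_i`,
ordered so that `q₁, …, q_l ⊆ p` and `q_{l+1}, …, q_k ⊄ p`, and set `b = q₁ ∩ … ∩ q_l`.
Then `∩_{i>l} p_i ⊄ p ∪ ⟨t⟩` iff for every `r ∈ b` there is `s ∈ R \ (p ∪ ⟨t⟩)` with
`s·r ∈ a`. -/
theorem stmt_10 {R : Type*} [CommRing R] (p : Ideal R) (hp : p.IsPrime)
    (t : R) (ht : (Ideal.span {t} : Ideal R).IsPrime)
    (a : Ideal R) (k l : ℕ) (hlk : l ≤ k) (q : Fin k → Ideal R)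
    (hdec : a = ⨅ i, q i)
    (hprimary : ∀ i, (q i).IsPrimary)
    (hdistinct : ∀ i j, i ≠ j → (q i).radical ≠ (q j).radical)
    (hirredundant : ∀ i, ¬ (⨅ j ∈ ({i}ᶜ : Set (Fin k)), q j) ≤ q i)
    (hin : ∀ i : Fin k, (i : ℕ) < l → q i ≤ p)
    (hout : ∀ i : Fin k, l ≤ (i : ℕ) → ¬ q i ≤ p) :
    ¬ ((⨅ i ∈ {i : Fin k | l ≤ (i : ℕ)}, (q i).radical : Ideal R) : Set R) ⊆
        ((p : Set R) ∪ (Ideal.span {t} : Ideal R)) ↔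
      ∀ r ∈ (⨅ i ∈ {i : Fin k | (i : ℕ) < l}, q i : Ideal R),
        ∃ s, s ∉ p ∧ s ∉ (Ideal.span {t} : Ideal R) ∧ s * r ∈ a := by
  constructor
  · intro h r hr
    obtain ⟨s, hs, hsn⟩ := Set.not_subset.1 h
    have hsp : s ∉ p := fun h' => hsn (Or.inl h')
    have hst : s ∉ (Ideal.span {t} : Ideal R) := fun h' => hsn (Or.inr h')
    simp only [SetLike.mem_coe, Submodule.mem_iInf, Set.mem_setOf_eq] at hs hr
    have hex : ∀ i : Fin k, ∃ n : ℕ, l ≤ (i : ℕ) → s ^ n ∈ q i := by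
      intro i
      by_cases hi : l ≤ (i : ℕ)
      · obtain ⟨n, hn⟩ := hs i hi
        exact ⟨n, fun _ => hn⟩
      · exact ⟨0, fun h' => absurd h' hi⟩
    choose n hn using hex
    refine ⟨s ^ (∑ i, n i), fun h' => hsp (hp.mem_of_pow_mem _ h'),
      fun h' => hst (ht.mem_of_pow_mem _ h'), ?_⟩
    rw [hdec, Submodule.mem_iInf]
    intro i
    by_cases hi : l ≤ (i : ℕ)
    · apply Ideal.mul_mem_right
      exact Ideal.pow_mem_of_pow_mem _ (hn i hi)
        (Finset.single_le_sum (f := n) (fun _ _ => Nat.zero_le _) (Finset.mem_univ i))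
    · exact Ideal.mul_mem_left _ _ (hr i (not_le.1 hi))
  · intro h hsub
    rcases Ideal.subset_union.1 hsub with h1 | h1
    · obtain ⟨i, hi, hle⟩ := aux_prime_iInf p hp _ _ h1
      exact hout i hi (Ideal.le_radical.trans hle)
    · obtain ⟨i, hi, hle⟩ := aux_prime_iInf _ ht _ _ h1
      obtain ⟨r, hr, hri⟩ := SetLike.not_le_iff_exists.1 (hirredundant i)
      simp only [Submodule.mem_iInf, Set.mem_compl_iff, Set.mem_singleton_iff] at hr
      obtain ⟨s, -, hst, hsa⟩ := h r (by
        simp only [Submodule.mem_iInf, Set.mem_setOf_eq]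
        intro j hj
        refine hr j ?_
        rintro rfl
        exact absurd hj (not_lt.2 hi))
      rw [hdec, Submodule.mem_iInf] at hsa
      have h3 := hsa i
      rw [mul_comm] at h3
      rcases (Ideal.isPrimary_iff.1 (hprimary i)).2 h3 with h4 | h4
      · exact hri h4
      · exact hst (hle h4)
end

section
/- Fix integers n ≥ 2, p ≥ 2, and d ≥ p, and identify the space of polynomials g ∈ ℂ[x₁,…,xₙ] of total degree at most d with ℂ^N, N = binom(d+n, n), via coefficients. Let I = ⟨x₁,…,x_{n−1}⟩ and let Σ₁ be the set of polynomials g of total degree at most d with g ∈ I^p for which there exists a point a ∈ ℂⁿ with (a₁,…,a_{n−1}) ≠ (0,…,0) such that all partial derivatives ∂g/∂xᵢ vanish at a and the determinant of the Hessian matrix (∂²g/∂xᵢ∂xⱼ)(a) vanishes. Then the closure of Σ₁ in the Euclidean topology of ℂ^N is a Zariski-closed subset, i.e., it is the common zero locus in ℂ^N of a family of polynomial functions in the coefficients. -/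
open MvPolynomial

theorem exists_point {A : Type} [CommRing A] [Algebra ℂ A] [Algebra.FiniteType ℂ A]
    (J : Ideal A) (hJ : J ≠ ⊤) : ∃ x : A →ₐ[ℂ] ℂ, ∀ a ∈ J, x a = 0 := by
  obtain ⟨m, hm, hJm⟩ := Ideal.exists_le_maximal J hJ
  let := Ideal.Quotient.field m
  have hfin : Module.Finite ℂ (A ⧸ m) := finite_of_finite_type_of_isJacobsonRing ℂ (A ⧸ m)
  have halg : Algebra.IsAlgebraic ℂ (A ⧸ m) := Algebra.IsAlgebraic.of_finite ℂ (A ⧸ m)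
  let l : (A ⧸ m) →ₐ[ℂ] ℂ := IsAlgClosed.lift
  refine ⟨l.comp (Ideal.Quotient.mkₐ ℂ m), fun a ha => ?_⟩
  have : Ideal.Quotient.mkₐ ℂ m a = 0 := Ideal.Quotient.eq_zero_iff_mem.mpr (hJm ha)
  rw [AlgHom.comp_apply, this, map_zero]

theorem exists_small_root (P : Polynomial ℂ) (hP : P.Monic) (hd : P.natDegree ≠ 0) :
    ∃ r : ℂ, P.IsRoot r ∧ ‖r‖₊ ^ P.natDegree ≤ ‖P.coeff 0‖₊ := by
  have hs : P.Splits := IsAlgClosed.splits P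
  have hcard := hs.natDegree_eq_card_roots
  have h0 := hs.coeff_zero_eq_prod_roots_of_monic hP
  have hne : P.roots.toFinset.Nonempty := by
    rw [Multiset.toFinset_nonempty]
    intro h
    apply hd; rw [hcard, h]; rfl
  obtain ⟨r, hr, hmin⟩ := Finset.exists_min_image _ (fun r : ℂ => ‖r‖₊) hne
  refine ⟨r, Polynomial.isRoot_of_mem_roots (Multiset.mem_toFinset.mp hr), ?_⟩
  have h1 : ‖P.coeff 0‖₊ = (P.roots.map (fun r => ‖r‖₊)).prod := by
    rw [h0, nnnorm_mul, nnnorm_pow, nnnorm_neg, nnnorm_one, one_pow, one_mul]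
    exact map_multiset_prod (nnnormHom : ℂ →*₀ NNReal) _
  rw [h1, hcard]
  have := Multiset.pow_card_le_prod (s := P.roots.map (fun r => ‖r‖₊)) (a := ‖r‖₊) (by
    intro x hx
    obtain ⟨s, hs, rfl⟩ := Multiset.mem_map.mp hx
    exact hmin s (Multiset.mem_toFinset.mpr hs))
  simpa using this

theorem root_bound (P : Polynomial ℂ) (hP : P.Monic) (a : ℂ) (h : P.IsRoot a) :
    ‖a‖ ≤ 1 + ∑ i ∈ Finset.range P.natDegree, ‖P.coeff i‖ := by
  have h1 := Polynomial.IsRoot.norm_lt_cauchyBound hP.ne_zero h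
  have h2 : (Polynomial.cauchyBound P) ≤ 1 + ∑ i ∈ Finset.range P.natDegree, ‖P.coeff i‖₊ := by
    rw [Polynomial.cauchyBound, hP.leadingCoeff, nnnorm_one, div_one, add_comm]
    gcongr
    apply Finset.sup_le
    intro i hi
    exact Finset.single_le_sum (f := fun i => ‖P.coeff i‖₊) (fun _ _ => zero_le) hi
  have h3 := h1.le.trans h2
  have := NNReal.coe_le_coe.mpr h3
  simpa using this

/-- lifting points -/
theorem lift_root {A : Type} [CommRing A] [IsDomain A] [Algebra ℂ A] [Algebra.FiniteType ℂ A]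
    {s : ℕ} [Algebra (MvPolynomial (Fin s) ℂ) A] [IsScalarTower ℂ (MvPolynomial (Fin s) ℂ) A]
    [Algebra.IsIntegral (MvPolynomial (Fin s) ℂ) A] [Module.IsTorsionFree (MvPolynomial (Fin s) ℂ) A]
    (h : A) (y : Fin s → ℂ) (t : ℂ)
    (ht : ((minpoly (MvPolynomial (Fin s) ℂ) h).map (eval y)).IsRoot t) :
    ∃ x : A →ₐ[ℂ] ℂ, (∀ b, x (algebraMap (MvPolynomial (Fin s) ℂ) A b) = eval y b) ∧ x h = t := by
  let B := MvPolynomial (Fin s) ℂ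
  let ψ : Polynomial B →+* A := (Polynomial.aeval h).toRingHom
  let ev : Polynomial B →+* ℂ := Polynomial.eval₂RingHom (eval y) t
  have hint : IsIntegral B h := Algebra.IsIntegral.isIntegral h
  have hker : RingHom.ker ψ ≤ RingHom.ker ev := by
    rw [show RingHom.ker ψ = _ from minpoly.ker_eval hint, Ideal.span_le]
    rintro _ rfl
    simp only [SetLike.mem_coe, RingHom.mem_ker]
    rw [Polynomial.IsRoot, Polynomial.eval_map] at ht
    exact ht
  have hψ : ∀ b, ψ (Polynomial.C b) = algebraMap B A b := fun b => by simp [ψ]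
  have hψX : ψ Polynomial.X = h := by simp [ψ]
  let : Algebra (Polynomial B) A := ψ.toAlgebra
  have : IsScalarTower B (Polynomial B) A := IsScalarTower.of_algebraMap_eq (fun b => (hψ b).symm)
  have : Algebra.IsIntegral (Polynomial B) A := Algebra.IsIntegral.tower_top (R := B)
  have : (RingHom.ker ev).IsPrime := RingHom.ker_isPrime ev
  obtain ⟨Q, -, hQp, hQ⟩ := Ideal.exists_ideal_over_prime_of_isIntegral (S := A) (RingHom.ker ev) ⊥ (by
    rw [← RingHom.ker_eq_comap_bot]; exact hker)
  obtain ⟨x, hx⟩ := exists_point Q hQp.ne_top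
  have key : ∀ q : Polynomial B, ev q = 0 → x (ψ q) = 0 := fun q hq => by
    apply hx
    have : q ∈ RingHom.ker ev := hq
    rw [← hQ] at this
    exact this
  have halg : ∀ c : ℂ, algebraMap B A (C c) = algebraMap ℂ A c := fun c =>
    (IsScalarTower.algebraMap_apply ℂ B A c).symm
  refine ⟨x, fun b => ?_, ?_⟩
  · have := key (Polynomial.C (b - C (eval y b))) (by rw [show ev = Polynomial.eval₂RingHom (eval y) t from rfl]; simp)
    rw [hψ, map_sub, halg, map_sub, AlgHom.commutes, sub_eq_zero] at this
    exact this
  · have := key (Polynomial.X - Polynomial.C (C t)) (by rw [show ev = Polynomial.eval₂RingHom (eval y) t from rfl]; simp)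
    rw [map_sub, hψ, hψX, halg, map_sub, AlgHom.commutes, sub_eq_zero] at this
    exact this

open Filter Topology

theorem fibre_finite {A : Type} [CommRing A] [Algebra ℂ A] [Algebra.FiniteType ℂ A]
    {s : ℕ} [Algebra (MvPolynomial (Fin s) ℂ) A]
    [Algebra.IsIntegral (MvPolynomial (Fin s) ℂ) A] (y : Fin s → ℂ) :
    {x : A →ₐ[ℂ] ℂ | ∀ b, x (algebraMap (MvPolynomial (Fin s) ℂ) A b) = eval y b}.Finite := by
  obtain ⟨G, hG⟩ := ‹Algebra.FiniteType ℂ A›.out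
  let R : A → Set ℂ := fun a =>
    {t | ((minpoly (MvPolynomial (Fin s) ℂ) a).map (eval y)).IsRoot t}
  have hR : ∀ a, (R a).Finite := fun a => Polynomial.finite_setOfPred_isRoot
    ((minpoly.monic (Algebra.IsIntegral.isIntegral a)).map _).ne_zero
  have hpi : (Set.univ.pi (fun a : G => R a)).Finite := Set.Finite.pi fun a => hR a
  refine Set.Finite.of_injOn (f := fun x : A →ₐ[ℂ] ℂ => fun a : G => x a) (fun x hx => ?_) ?_ hpi
  · intro a _
    show Polynomial.IsRoot _ _
    have h0 := congrArg x (minpoly.aeval (MvPolynomial (Fin s) ℂ) (a : A))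
    have hx' : (x : A →+* ℂ).comp (algebraMap (MvPolynomial (Fin s) ℂ) A) = eval y :=
      RingHom.ext hx
    rw [Polynomial.IsRoot, Polynomial.eval_map, ← hx']
    rw [map_zero, Polynomial.aeval_def] at h0
    rw [← h0]
    exact (Polynomial.hom_eval₂ _ _ (x : A →+* ℂ) _).symm
  · intro x _ x' _ hxx
    apply AlgHom.ext_of_adjoin_eq_top hG
    intro a ha
    exact congrFun hxx ⟨a, ha⟩

theorem exists_separating {A : Type} [CommRing A] [Algebra ℂ A] (x : A →ₐ[ℂ] ℂ)
    (F : Set (A →ₐ[ℂ] ℂ)) (hF : F.Finite) :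
    ∃ h : A, x h = 0 ∧ ∀ x' ∈ F, x' h = 0 → x' = x := by
  classical
  have hL : ∀ x' : A →ₐ[ℂ] ℂ, ∃ l : A, x' ≠ x → x l = 1 ∧ x' l = 0 := by
    intro x'
    by_cases hx : x' = x
    · exact ⟨0, fun h => absurd hx h⟩
    · obtain ⟨a, ha⟩ : ∃ a, x' a ≠ x a := by
        by_contra hcon
        push Not at hcon
        exact hx (AlgHom.ext hcon)
      refine ⟨(x a - x' a)⁻¹ • (a - algebraMap ℂ A (x' a)), fun _ => ⟨?_, ?_⟩⟩
      · have : x a - x' a ≠ 0 := sub_ne_zero.mpr (Ne.symm ha)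
        rw [map_smul, map_sub, AlgHom.commutes]
        simp [this]
      · rw [map_smul, map_sub, AlgHom.commutes]
        simp
  choose l hl using hL
  let E := hF.toFinset.erase x
  refine ⟨1 - ∏ x' ∈ E, l x', ?_, ?_⟩
  · rw [map_sub, map_one, map_prod, Finset.prod_eq_one, sub_self]
    intro x' hx'
    exact (hl x' (Finset.ne_of_mem_erase hx')).1
  · intro x' hx' h0
    by_contra hne
    have hmem : x' ∈ E := Finset.mem_erase.mpr ⟨hne, hF.mem_toFinset.mpr hx'⟩
    rw [map_sub, map_one, map_prod, Finset.prod_eq_zero hmem (hl x' hne).2] at h0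
    simp at h0

theorem line_nonvanishing {s : ℕ} (b0 : MvPolynomial (Fin s) ℂ) (y z : Fin s → ℂ)
    (hz : eval z b0 ≠ 0) :
    ∀ᶠ t in 𝓝[≠] (0:ℂ), eval (fun i => y i + t * (z i - y i)) b0 ≠ 0 := by
  let l : Fin s → Polynomial ℂ :=
    fun i => Polynomial.C (y i) + Polynomial.X * Polynomial.C (z i - y i)
  let q : Polynomial ℂ := eval₂ Polynomial.C l b0
  have hq : ∀ t, q.eval t = eval (fun i => y i + t * (z i - y i)) b0 := by
    intro t
    have := MvPolynomial.eval₂_comp_left (Polynomial.evalRingHom t) Polynomial.C l b0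
    rw [Polynomial.coe_evalRingHom] at this
    rw [this, eval, coe_eval₂Hom]
    congr 1
    · ext <;> simp
    · ext i; simp [l]
  have hq0 : q ≠ 0 := by
    intro h
    have h1 := hq 1
    rw [h] at h1
    have : (fun i => y i + 1 * (z i - y i)) = z := by ext i; simp
    rw [this] at h1
    exact hz (by simpa using h1.symm)
  have hfin := Polynomial.finite_setOfPred_isRoot hq0
  have : ∀ᶠ t in 𝓝[≠] (0:ℂ), t ∉ {t | q.IsRoot t} := by
    have hc : (({t | q.IsRoot t} \ {0} : Set ℂ)ᶜ) ∈ 𝓝 (0:ℂ) :=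
      (hfin.subset Set.sdiff_subset).isClosed.isOpen_compl.mem_nhds (by simp)
    filter_upwards [nhdsWithin_le_nhds hc, self_mem_nhdsWithin] with t ht ht0 h
    exact ht ⟨h, ht0⟩
  filter_upwards [this] with t ht h
  exact ht (by show q.eval t = 0; rw [hq, h])

set_option maxHeartbeats 1000000 in
theorem dense_nonvanishing {A : Type} [CommRing A] [IsDomain A] [Algebra ℂ A]
    [Algebra.FiniteType ℂ A] (f : A) (hf : f ≠ 0) (x : A →ₐ[ℂ] ℂ) :
    ∃ (U : Ultrafilter ℂ) (u : ℂ → (A →ₐ[ℂ] ℂ)), (∀ᶠ t in (U : Filter ℂ), u t f ≠ 0) ∧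
      ∀ a, Tendsto (fun t => u t a) U (𝓝 (x a)) := by
  obtain ⟨s, g, hginj, hgfin⟩ := exists_finite_inj_algHom_of_fg ℂ A
  let B := MvPolynomial (Fin s) ℂ
  let : Algebra (MvPolynomial (Fin s) ℂ) A := g.toRingHom.toAlgebra
  have : IsScalarTower ℂ (MvPolynomial (Fin s) ℂ) A :=
    IsScalarTower.of_algebraMap_eq (fun c => (g.commutes c).symm)
  have : Module.Finite (MvPolynomial (Fin s) ℂ) A := hgfin
  have : Algebra.IsIntegral (MvPolynomial (Fin s) ℂ) A := Algebra.IsIntegral.of_finite _ _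
  have : FaithfulSMul (MvPolynomial (Fin s) ℂ) A :=
    (faithfulSMul_iff_algebraMap_injective _ _).mpr hginj
  have : Module.IsTorsionFree (MvPolynomial (Fin s) ℂ) A := inferInstance
  have hg : ∀ b, algebraMap (MvPolynomial (Fin s) ℂ) A b = g b := fun b => rfl
  -- the base point
  let y : Fin s → ℂ := fun i => x (g (X i))
  have hy : ∀ b, x (algebraMap (MvPolynomial (Fin s) ℂ) A b) = eval y b := by
    intro b
    have : x.comp g = aeval y := by
      ext i; simp [y]
    have h2 := AlgHom.congr_fun this b
    rw [hg]
    simpa [aeval_eq_eval] using h2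
  -- nonvanishing
  obtain ⟨b0, hb0, hfb⟩ := (Algebra.IsIntegral.isIntegral (R := MvPolynomial (Fin s) ℂ) f).isAlgebraic.exists_nonzero_dvd
    (mem_nonZeroDivisors_of_ne_zero hf)
  obtain ⟨z, hz⟩ : ∃ z, eval z b0 ≠ 0 := by
    by_contra hcon
    push Not at hcon
    exact hb0 (MvPolynomial.funext (by simpa using hcon))
  let yt : ℂ → Fin s → ℂ := fun t i => y i + t * (z i - y i)
  have hyt0 : yt 0 = y := by ext i; simp [yt]
  have hytc : Continuous yt := by fun_prop
  have hevc : ∀ b : MvPolynomial (Fin s) ℂ, Tendsto (fun t => eval (yt t) b) (𝓝[≠] 0) (𝓝 (eval y b)) := by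
    intro b
    have h1 : Continuous (fun t => eval (yt t) b) := (MvPolynomial.continuous_eval b).comp hytc
    have h2 := h1.tendsto 0
    rw [hyt0] at h2
    exact h2.mono_left nhdsWithin_le_nhds
  have hnv : ∀ᶠ t in 𝓝[≠] (0:ℂ), eval (yt t) b0 ≠ 0 := line_nonvanishing b0 y z hz
  -- separating element
  obtain ⟨h, hxh, hsep⟩ := exists_separating x _ (fibre_finite (A := A) y)
  have hint : ∀ a : A, IsIntegral (MvPolynomial (Fin s) ℂ) a := fun a => Algebra.IsIntegral.isIntegral a
  have hrootgen : ∀ (x' : A →ₐ[ℂ] ℂ) (y' : Fin s → ℂ),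
      (∀ b, x' (algebraMap (MvPolynomial (Fin s) ℂ) A b) = eval y' b) → ∀ a,
      ((minpoly (MvPolynomial (Fin s) ℂ) a).map (eval y')).IsRoot (x' a) := by
    intro x' y' hx a
    have h0 := congrArg x' (minpoly.aeval (MvPolynomial (Fin s) ℂ) (a : A))
    have hx' : (x' : A →+* ℂ).comp (algebraMap (MvPolynomial (Fin s) ℂ) A) = eval y' :=
      RingHom.ext hx
    rw [Polynomial.IsRoot, Polynomial.eval_map, ← hx']
    rw [map_zero, Polynomial.aeval_def] at h0
    rw [← h0]
    exact (Polynomial.hom_eval₂ _ _ (x' : A →+* ℂ) _).symm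
  have hmon : ∀ a y', ((minpoly (MvPolynomial (Fin s) ℂ) (a:A)).map (eval y')).Monic :=
    fun a y' => (minpoly.monic (hint a)).map _
  have hdeg : ∀ a y', ((minpoly (MvPolynomial (Fin s) ℂ) (a:A)).map (eval y')).natDegree =
      (minpoly (MvPolynomial (Fin s) ℂ) (a:A)).natDegree :=
    fun a y' => (minpoly.monic (hint a)).natDegree_map _
  have hk : (minpoly (MvPolynomial (Fin s) ℂ) h).natDegree ≠ 0 := (minpoly.natDegree_pos (hint h)).ne'
  have hex : ∀ t : ℂ, ∃ x' : A →ₐ[ℂ] ℂ,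
      (∀ b, x' (algebraMap (MvPolynomial (Fin s) ℂ) A b) = eval (yt t) b) ∧
      ‖x' h‖₊ ^ (minpoly (MvPolynomial (Fin s) ℂ) h).natDegree ≤
        ‖eval (yt t) ((minpoly (MvPolynomial (Fin s) ℂ) h).coeff 0)‖₊ := by
    intro t
    obtain ⟨r, hr, hrb⟩ := exists_small_root _ (hmon h (yt t)) (by rw [hdeg]; exact hk)
    obtain ⟨x', hx', hx'h⟩ := lift_root h (yt t) r hr
    refine ⟨x', hx', ?_⟩
    rw [hx'h]
    rw [hdeg, Polynomial.coeff_map] at hrb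
    exact hrb
  choose u hu hub using hex
  obtain ⟨U, hU⟩ : ∃ U : Ultrafilter ℂ, (U : Filter ℂ) ≤ 𝓝[≠] 0 := Ultrafilter.exists_le _
  -- limits exist
  have hlim : ∀ a, ∃ c, Tendsto (fun t => u t a) U (𝓝 c) := by
    intro a
    let Cf : ℂ → ℝ := fun t => 1 + ∑ i ∈ Finset.range (minpoly (MvPolynomial (Fin s) ℂ) a).natDegree,
      ‖eval (yt t) ((minpoly (MvPolynomial (Fin s) ℂ) a).coeff i)‖
    have hb : ∀ t, ‖u t a‖ ≤ Cf t := by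
      intro t
      have := root_bound _ (hmon a (yt t)) _ (hrootgen (u t) (yt t) (hu t) a)
      rw [hdeg] at this
      simpa only [Polynomial.coeff_map] using this
    have hC : Tendsto Cf U (𝓝 (1 + ∑ i ∈ Finset.range (minpoly (MvPolynomial (Fin s) ℂ) a).natDegree,
      ‖eval y ((minpoly (MvPolynomial (Fin s) ℂ) a).coeff i)‖)) :=
      (tendsto_const_nhds.add (tendsto_finsetSum _ fun i _ => (hevc _).norm)).mono_left hU
    set C0 := (1 + ∑ i ∈ Finset.range (minpoly (MvPolynomial (Fin s) ℂ) a).natDegree,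
      ‖eval y ((minpoly (MvPolynomial (Fin s) ℂ) a).coeff i)‖)
    have hev : ∀ᶠ t in (U : Filter ℂ), u t a ∈ Metric.closedBall (0:ℂ) (C0 + 1) := by
      filter_upwards [hC.eventually (gt_mem_nhds (lt_add_one C0))] with t ht
      rw [mem_closedBall_zero_iff]
      exact (hb t).trans ht.le
    obtain ⟨c, -, hc⟩ := (isCompact_closedBall (0:ℂ) (C0 + 1)).ultrafilter_le_nhds
      (U.map (fun t => u t a)) (Filter.le_principal_iff.mpr hev)
    exact ⟨c, hc⟩
  choose L hL using hlim
  let x0 : A →ₐ[ℂ] ℂ :=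
    { toFun := L
      map_one' := tendsto_nhds_unique (hL 1) (by simp)
      map_zero' := tendsto_nhds_unique (hL 0) (by simp)
      map_mul' := fun a b => tendsto_nhds_unique (hL (a * b)) (by simpa using (hL a).mul (hL b))
      map_add' := fun a b => tendsto_nhds_unique (hL (a + b)) (by simpa using (hL a).add (hL b))
      commutes' := fun c => tendsto_nhds_unique (hL _) (by simp) }
  have hx0 : x0 = x := by
    apply hsep
    · intro b
      refine tendsto_nhds_unique (hL _) ?_
      simp only [hu]
      exact (hevc b).mono_left hU
    · have h1 : Tendsto (fun t => ‖u t h‖ ^ (minpoly (MvPolynomial (Fin s) ℂ) h).natDegree) U (𝓝 0) := by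
        have h2 : Tendsto (fun t => ‖eval (yt t) ((minpoly (MvPolynomial (Fin s) ℂ) h).coeff 0)‖) U (𝓝 0) := by
          have h3 := ((hevc ((minpoly (MvPolynomial (Fin s) ℂ) h).coeff 0)).mono_left hU).norm
          have h4 := hrootgen x y hy h
          rw [hxh, Polynomial.IsRoot, ← Polynomial.coeff_zero_eq_eval_zero, Polynomial.coeff_map] at h4
          rwa [h4, norm_zero] at h3
        refine squeeze_zero (fun t => by positivity) (fun t => ?_) h2
        exact_mod_cast hub t
      have h5 := tendsto_nhds_unique h1 ((hL h).norm.pow _)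
      have h6 := eq_zero_of_pow_eq_zero h5.symm
      exact norm_eq_zero.mp h6
  refine ⟨U, u, ?_, fun a => ?_⟩
  · filter_upwards [hU hnv] with t ht h0
    obtain ⟨c, hc⟩ := hfb
    apply ht
    rw [← hu t, hc, map_mul, h0, zero_mul]
  · have := hL a
    rwa [show L a = x a from AlgHom.congr_fun hx0 a] at this

theorem generic_lift {A B : Type} [CommRing A] [IsDomain A] [Algebra ℂ A] [Algebra.FiniteType ℂ A]
    [CommRing B] [IsDomain B] [Algebra ℂ B] [Algebra.FiniteType ℂ B] (i : B →ₐ[ℂ] A)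
    (hi : Function.Injective i) :
    ∃ f : B, f ≠ 0 ∧ ∀ y : B →ₐ[ℂ] ℂ, y f ≠ 0 → ∃ x : A →ₐ[ℂ] ℂ, ∀ b, x (i b) = y b := by
  have : IsNoetherianRing B := Algebra.FiniteType.isNoetherianRing ℂ B
  have hft : (i : B →+* A).FiniteType := by
    have h1 : (algebraMap ℂ A).FiniteType := RingHom.finiteType_algebraMap.mpr inferInstance
    rw [← i.comp_algebraMap] at h1
    exact h1.of_comp_finiteType
  have hfp : (i : B →+* A).FinitePresentation := RingHom.FinitePresentation.of_finiteType.mp hft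
  obtain ⟨D, hD⟩ := PrimeSpectrum.exists_constructibleSetData_iff.mpr
    (PrimeSpectrum.isConstructible_range_comap hfp)
  have hgen : (⊥ : PrimeSpectrum B) ∈ D.toSet := by
    rw [hD]
    refine ⟨⊥, ?_⟩
    ext b
    simp only [PrimeSpectrum.comap_asIdeal, Ideal.mem_comap]
    show i b = 0 ↔ b = 0
    exact map_eq_zero_iff i hi
  simp only [PrimeSpectrum.ConstructibleSetData.toSet, Set.mem_iUnion] at hgen
  obtain ⟨E, hE, hE1, hE2⟩ := hgen
  have hg : ∀ j, E.g j = 0 := fun j => hE1 ⟨j, rfl⟩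
  have hf : E.f ≠ 0 := fun h => hE2 (by
    rw [PrimeSpectrum.mem_zeroLocus]
    rintro _ rfl
    rw [h]; exact zero_mem _)
  refine ⟨E.f, hf, fun y hy => ?_⟩
  let q : PrimeSpectrum B := ⟨RingHom.ker (y : B →+* ℂ), RingHom.ker_isPrime _⟩
  have hq : q ∈ Set.range (PrimeSpectrum.comap (i : B →+* A)) := by
    rw [← hD, PrimeSpectrum.ConstructibleSetData.toSet]
    refine Set.mem_biUnion hE ⟨?_, ?_⟩
    · rintro _ ⟨j, rfl⟩
      rw [hg]; exact zero_mem _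
    · intro h
      exact hy (h rfl)
  obtain ⟨Q, hQ⟩ := hq
  obtain ⟨x, hx⟩ := exists_point Q.asIdeal Q.isPrime.ne_top
  refine ⟨x, fun b => ?_⟩
  have hmem : b - algebraMap ℂ B (y b) ∈ q.asIdeal := by
    show y _ = 0
    rw [map_sub, AlgHom.commutes]; simp
  rw [← hQ] at hmem
  have := hx _ (Ideal.mem_comap.mp hmem)
  rw [RingHom.coe_coe, map_sub, map_sub, AlgHom.commutes, AlgHom.commutes] at this
  simpa [sub_eq_zero] using this

/-- zero set of an ideal -/
def IsZar {N : ℕ} (S : Set (Fin N → ℂ)) : Prop :=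
  ∃ J : Ideal (MvPolynomial (Fin N) ℂ), S = {v | ∀ q ∈ J, eval v q = 0}

theorem IsZar.union {N : ℕ} {S T : Set (Fin N → ℂ)} (hS : IsZar S) (hT : IsZar T) :
    IsZar (S ∪ T) := by
  obtain ⟨J, rfl⟩ := hS
  obtain ⟨K, rfl⟩ := hT
  refine ⟨J ⊓ K, ?_⟩
  ext v
  constructor
  · rintro (h | h) q hq
    · exact h q hq.1
    · exact h q hq.2
  · intro h
    by_contra hcon
    simp only [Set.mem_union, Set.mem_setOf_eq, not_or, not_forall] at hcon
    obtain ⟨⟨a, ha, ha'⟩, ⟨b, hb, hb'⟩⟩ := hcon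
    have := h (a * b) ⟨Ideal.mul_mem_right _ _ ha, Ideal.mul_mem_left _ _ hb⟩
    rw [map_mul] at this
    exact (mul_ne_zero ha' hb') this

theorem IsZar.biUnion {N : ℕ} {α : Type} (s : Set α) (hs : s.Finite) (S : α → Set (Fin N → ℂ))
    (h : ∀ a ∈ s, IsZar (S a)) : IsZar (⋃ a ∈ s, S a) := by
  induction s, hs using Set.Finite.induction_on with
  | empty =>
    refine ⟨⊤, ?_⟩
    ext v
    simp only [Set.mem_empty_iff_false, Set.iUnion_of_empty, Set.iUnion_empty, Set.mem_setOf_eq,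
      false_iff, not_forall]
    exact ⟨1, trivial, by simp⟩
  | insert _ _ ih =>
    rw [Set.biUnion_insert]
    exact (h _ (Set.mem_insert _ _)).union (ih fun a ha => h a (Set.mem_insert_of_mem _ ha))

theorem closure_domain {A : Type} [CommRing A] [IsDomain A] [Algebra ℂ A] [Algebra.FiniteType ℂ A]
    {N : ℕ} (c : Fin N → A) :
    IsZar (closure {v : Fin N → ℂ | ∃ x : A →ₐ[ℂ] ℂ, ∀ i, x (c i) = v i}) := by
  let ψ : MvPolynomial (Fin N) ℂ →ₐ[ℂ] A := aeval c
  have hprime : (RingHom.ker ψ).IsPrime := RingHom.ker_isPrime ψ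
  refine ⟨RingHom.ker ψ, ?_⟩
  apply Set.Subset.antisymm
  · apply closure_minimal
    · rintro v ⟨x, hx⟩ q hq
      have h1 : x.comp ψ = aeval v := by
        ext i; simp [ψ, hx]
      have h2 := AlgHom.congr_fun h1 q
      rw [AlgHom.comp_apply, show ψ q = 0 from hq, map_zero] at h2
      rw [aeval_eq_eval] at h2
      exact h2.symm
    · rw [show {v : Fin N → ℂ | ∀ q ∈ RingHom.ker ψ, eval v q = 0} =
        ⋂ q ∈ RingHom.ker ψ, {v | eval v q = 0} by ext; simp]
      exact isClosed_biInter fun q _ =>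
        isClosed_eq (MvPolynomial.continuous_eval q) continuous_const
  · intro v hv
    obtain ⟨f, hf, hlift⟩ := generic_lift (Ideal.kerLiftAlg ψ) (Ideal.kerLiftAlg_injective ψ)
    let y : (MvPolynomial (Fin N) ℂ ⧸ RingHom.ker ψ) →ₐ[ℂ] ℂ :=
      Ideal.Quotient.liftₐ _ (aeval v) (fun q hq => by
        rw [aeval_eq_eval]; exact hv q hq)
    obtain ⟨U, u, hu, hlim⟩ := dense_nonvanishing f hf y
    have hy : ∀ i, y (Ideal.Quotient.mk _ (X i)) = v i := fun i => by
      show aeval v (X i) = v i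
      simp
    refine mem_closure_of_tendsto (b := (U : Filter ℂ))
      (f := fun t i => u t (Ideal.Quotient.mk _ (X i))) ?_ ?_
    · rw [tendsto_pi_nhds]
      intro i
      rw [← hy]
      exact hlim _
    · filter_upwards [hu] with t ht
      obtain ⟨x, hx⟩ := hlift (u t) ht
      refine ⟨x, fun i => ?_⟩
      rw [← hx]
      congr 1
      show c i = ψ (X i)
      simp [ψ]

theorem closure_image {A : Type} [CommRing A] [Algebra ℂ A] [Algebra.FiniteType ℂ A]
    {N : ℕ} (c : Fin N → A) :
    IsZar (closure {v : Fin N → ℂ | ∃ x : A →ₐ[ℂ] ℂ, ∀ i, x (c i) = v i}) := by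
  have : IsNoetherianRing A := Algebra.FiniteType.isNoetherianRing ℂ A
  have hfin : (minimalPrimes A).Finite := minimalPrimes.finite_of_isNoetherianRing A
  have heq : {v : Fin N → ℂ | ∃ x : A →ₐ[ℂ] ℂ, ∀ i, x (c i) = v i} =
      ⋃ P ∈ minimalPrimes A, {v : Fin N → ℂ | ∃ x : (A ⧸ P) →ₐ[ℂ] ℂ,
        ∀ i, x (Ideal.Quotient.mk P (c i)) = v i} := by
    ext v
    simp only [Set.mem_setOf_eq, Set.mem_iUnion]
    constructor
    · rintro ⟨x, hx⟩
      have : (RingHom.ker x).IsPrime := RingHom.ker_isPrime x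
      obtain ⟨P, hP, hPx⟩ := Ideal.exists_minimalPrimes_le (I := ⊥) (J := RingHom.ker x) bot_le
      refine ⟨P, hP, Ideal.Quotient.liftₐ P x (fun a ha => hPx ha), fun i => ?_⟩
      rw [← hx]
      rfl
    · rintro ⟨P, _, x, hx⟩
      exact ⟨x.comp (Ideal.Quotient.mkₐ ℂ P), hx⟩
  rw [heq, hfin.closure_biUnion]
  apply IsZar.biUnion _ hfin
  intro P hP
  have : P.IsPrime := Ideal.minimalPrimes_isPrime hP
  exact closure_domain _

/-- Elimination form. -/
theorem closure_proj {N : ℕ} {τ : Type} [Finite τ] (T : Set (MvPolynomial (Fin N ⊕ τ) ℂ)) :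
    IsZar (closure {v : Fin N → ℂ | ∃ w : τ → ℂ, ∀ q ∈ T, eval (Sum.elim v w) q = 0}) := by
  have := closure_image (A := MvPolynomial (Fin N ⊕ τ) ℂ ⧸ Ideal.span T)
    (fun i : Fin N => Ideal.Quotient.mk _ (X (Sum.inl i)))
  convert this using 2
  ext v
  constructor
  · rintro ⟨w, hw⟩
    have hle : Ideal.span T ≤ RingHom.ker (eval (Sum.elim v w)) := Ideal.span_le.mpr hw
    refine ⟨Ideal.Quotient.liftₐ _ (aeval (Sum.elim v w)) (fun q hq => ?_), fun i => ?_⟩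
    · rw [aeval_eq_eval]; exact hle hq
    · show aeval (Sum.elim v w) (X (Sum.inl i)) = v i
      simp
  · rintro ⟨x, hx⟩
    refine ⟨fun j => x (Ideal.Quotient.mk _ (X (Sum.inr j))), fun q hq => ?_⟩
    have h1 : x.comp (Ideal.Quotient.mkₐ ℂ (Ideal.span T)) =
        aeval (Sum.elim v (fun j => x (Ideal.Quotient.mk _ (X (Sum.inr j))))) := by
      ext i
      rcases i with i | i
      · simpa using hx i
      · simp
    have h2 := AlgHom.congr_fun h1 q
    rw [aeval_eq_eval, AlgHom.comp_apply] at h2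
    have h3 : Ideal.Quotient.mkₐ ℂ (Ideal.span T) q = 0 :=
      Ideal.Quotient.eq_zero_iff_mem.mpr (Ideal.subset_span hq)
    rw [h3, map_zero] at h2
    exact h2.symm

/-- Fix `n ≥ 2`, `p ≥ 2`, `d ≥ p`, identify the space of polynomials in
`ℂ[x₁,…,xₙ]` of total degree at most `d` with `ℂ^N`, `N = (d+n).choose n`, via coefficients
(a linear identification `φ`). Let `I = ⟨x₁,…,x_{n-1}⟩` and let `Σ₁` be the set of polynomials
`g` of total degree at most `d` with `g ∈ I^p` admitting a point `a ∈ ℂⁿ` with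
`(a₁,…,a_{n-1}) ≠ 0` at which all partial derivatives of `g` vanish and the Hessian
determinant of `g` vanishes. Then the closure of `Σ₁` in the Euclidean topology of `ℂ^N` is
the common zero locus of a family of polynomial functions in the coefficients. -/
theorem stmt_11 (n p d : ℕ) (hn : 2 ≤ n) (hp : 2 ≤ p) (hd : p ≤ d)
    (I : Ideal (MvPolynomial (Fin n) ℂ))
    (hI : I = Ideal.span {f : MvPolynomial (Fin n) ℂ |
      ∃ i : Fin n, (i : ℕ) < n - 1 ∧ f = X i})
    (Sigma1 : Set (MvPolynomial (Fin n) ℂ))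
    (hSigma1 : Sigma1 = {g : MvPolynomial (Fin n) ℂ |
      g.totalDegree ≤ d ∧ g ∈ I ^ p ∧
      ∃ a : Fin n → ℂ,
        (∃ i : Fin n, (i : ℕ) < n - 1 ∧ a i ≠ 0) ∧
        (∀ i : Fin n, eval a (pderiv i g) = 0) ∧
        Matrix.det (Matrix.of fun i j : Fin n => eval a (pderiv i (pderiv j g))) = 0})
    (N : ℕ) (hN : N = (d + n).choose n)
    (φ : (Fin N → ℂ) ≃ₗ[ℂ] ↥(restrictTotalDegree (Fin n) ℂ d)) :
    ∃ (ι : Type) (F : ι → MvPolynomial (Fin N) ℂ),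
      closure {x : Fin N → ℂ | (φ x : MvPolynomial (Fin n) ℂ) ∈ Sigma1} =
        {x : Fin N → ℂ | ∀ i : ι, eval x (F i) = 0} := by

  classical
  subst hSigma1
  let V : Submodule ℂ (Fin N → ℂ) :=
    ((I ^ p).restrictScalars ℂ).comap ((restrictTotalDegree (Fin n) ℂ d).subtype ∘ₗ φ.toLinearMap)
  let τ := Fin n ⊕ Fin n
  let R := MvPolynomial (Fin N ⊕ τ) ℂ
  let e : Fin N → MvPolynomial (Fin n) ℂ := fun k => (φ (Pi.single k 1) : MvPolynomial (Fin n) ℂ)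
  have hφ : ∀ x, (φ x : MvPolynomial (Fin n) ℂ) = ∑ k, x k • e k := by
    intro x
    have h1 : x = ∑ k, x k • (Pi.single k 1 : Fin N → ℂ) := by
      ext j; simp [Finset.sum_apply, Pi.single_apply]
    conv_lhs => rw [h1]
    simp [e]
  -- a polynomial family realising a linear operator applied to `φ x`, evaluated at `a`
  let lp : (MvPolynomial (Fin n) ℂ →ₗ[ℂ] MvPolynomial (Fin n) ℂ) → R := fun D =>
    ∑ k, X (Sum.inl k) * rename (fun j => Sum.inr (Sum.inl j)) (D (e k))
  have hlp : ∀ D x (w : τ → ℂ), eval (Sum.elim x w) (lp D) =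
      eval (fun j => w (Sum.inl j)) (D (φ x)) := by
    intro D x w
    rw [hφ]
    simp only [lp, map_sum, map_mul, eval_X, eval_rename, map_smul, smul_eval, Sum.elim_inl]
    rfl
  let gp : Fin n → R := fun i => lp (pderiv i).toLinearMap
  let hp2 : R := Matrix.det (Matrix.of fun i j : Fin n =>
    lp ((pderiv i).toLinearMap ∘ₗ (pderiv j).toLinearMap))
  let rp : R := (∑ i ∈ Finset.univ.filter (fun i : Fin n => (i : ℕ) < n - 1),
    X (Sum.inr (Sum.inl i)) * X (Sum.inr (Sum.inr i))) - 1
  let lf : Module.Dual ℂ (Fin N → ℂ) → R := fun l => ∑ k, C (l (Pi.single k 1)) * X (Sum.inl k)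
  have hlf : ∀ l x (w : τ → ℂ), eval (Sum.elim x w) (lf l) = l x := by
    intro l x w
    have h1 : x = ∑ k, x k • (Pi.single k 1 : Fin N → ℂ) := by
      ext j; simp [Finset.sum_apply, Pi.single_apply]
    conv_rhs => rw [h1]
    simp [lf, mul_comm]
  let T : Set R := Set.range gp ∪ {hp2} ∪ {rp} ∪ lf '' (V.dualAnnihilator : Set _)
  obtain ⟨J, hJ⟩ := closure_proj T
  refine ⟨J, fun q => q, ?_⟩
  have hset : {x : Fin N → ℂ | (φ x : MvPolynomial (Fin n) ℂ) ∈ {g : MvPolynomial (Fin n) ℂ |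
      g.totalDegree ≤ d ∧ g ∈ I ^ p ∧
      ∃ a : Fin n → ℂ,
        (∃ i : Fin n, (i : ℕ) < n - 1 ∧ a i ≠ 0) ∧
        (∀ i : Fin n, eval a (pderiv i g) = 0) ∧
        Matrix.det (Matrix.of fun i j : Fin n => eval a (pderiv i (pderiv j g))) = 0}} =
      {v : Fin N → ℂ | ∃ w : τ → ℂ, ∀ q ∈ T, eval (Sum.elim v w) q = 0} := by
    ext x
    have hdegx : (φ x : MvPolynomial (Fin n) ℂ).totalDegree ≤ d :=
      (mem_restrictTotalDegree _ _ _).mp (φ x).2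
    have hdet : ∀ w : τ → ℂ, eval (Sum.elim x w) hp2 = Matrix.det (Matrix.of fun i j : Fin n =>
        eval (fun j => w (Sum.inl j)) (pderiv i (pderiv j (φ x : MvPolynomial (Fin n) ℂ)))) := by
      intro w
      simp only [hp2]
      rw [RingHom.map_det]
      congr 1
      ext i j
      simp only [RingHom.mapMatrix_apply, Matrix.map_apply, Matrix.of_apply, hlp]
      rfl
    have hrp : ∀ w : τ → ℂ, eval (Sum.elim x w) rp =
        (∑ i ∈ Finset.univ.filter (fun i : Fin n => (i : ℕ) < n - 1),
          w (Sum.inl i) * w (Sum.inr i)) - 1 := by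
      intro w
      simp [rp]
    have hVx : (φ x : MvPolynomial (Fin n) ℂ) ∈ I ^ p ↔ x ∈ V := Iff.rfl
    have hV : x ∈ V ↔ ∀ l ∈ V.dualAnnihilator, l x = 0 :=
      (Subspace.forall_mem_dualAnnihilator_apply_eq_zero_iff V x).symm
    constructor
    · rintro ⟨-, hIp, a, ⟨i, hi, hai⟩, hgrad, hhess⟩
      refine ⟨Sum.elim a (Pi.single i (a i)⁻¹), ?_⟩
      rintro q (((⟨j, rfl⟩ | rfl) | rfl) | ⟨l, hl, rfl⟩)
      · simp only [gp]
        rw [hlp]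
        exact hgrad j
      · rw [hdet]; exact hhess
      · rw [hrp, Finset.sum_eq_single i]
        · simp [hai]
        · intro j _ hj
          simp [hj]
        · intro h
          exact absurd (by simpa using hi) h
      · rw [hlf]
        exact hV.mp (hVx.mp hIp) l hl
    · rintro ⟨w, hw⟩
      refine ⟨hdegx, ?_, fun j => w (Sum.inl j), ?_, ?_, ?_⟩
      · rw [hVx, hV]
        intro l hl
        rw [← hlf l x w]
        exact hw _ (Or.inr ⟨l, hl, rfl⟩)
      · have h1 := hw rp (Or.inl (Or.inr rfl))
        rw [hrp] at h1
        by_contra hcon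
        push Not at hcon
        rw [Finset.sum_eq_zero] at h1
        · simp at h1
        · intro i hi
          rw [hcon i (Finset.mem_filter.mp hi).2, zero_mul]
      · intro i
        have := hw (gp i) (Or.inl (Or.inl (Or.inl ⟨i, rfl⟩)))
        simp only [gp] at this
        rw [hlp] at this
        exact this
      · have := hw hp2 (Or.inl (Or.inl (Or.inr rfl)))
        rw [hdet] at this
        exact this
  rw [hset, hJ]
  ext v
  simp
end
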